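/- arXiv:2605.12367 — 2 statements merged into one kernel-verified Lean document; each statement's English description precedes it below -/
import Mathlib

section
/- Let κ > 0 and let v : ℝ² → ℂ be of class C² on all of ℝ², satisfy the Helmholtz equation Δv + κ²v = 0 on all of ℝ², and satisfy the Sommerfeld radiation condition for wavenumber κ. Then v vanishes identically: v(x) = 0 for all x ∈ ℝ². -/
noncomputable section

/-- The Euclidean Laplacian of a complex-valued function on `ℝ²`,
given as the sum of the second partial derivatives in the coordinate directions. -/
def lap (u : EuclideanSpace ℝ (Fin 2) → ℂ) (x : EuclideanSpace ℝ (Fin 2)) : ℂ :=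
  ∑ i : Fin 2,
    fderiv ℝ (fun y => fderiv ℝ u y (EuclideanSpace.single i 1)) x (EuclideanSpace.single i 1)

/-- `v` satisfies the Sommerfeld radiation condition for wavenumber `κ`: for every `ε > 0`
there is `R₀ > 0` such that `‖x‖^{1/2}·|∂v/∂r(x) − iκ v(x)| ≤ ε` whenever `‖x‖ ≥ R₀`,
where the radial derivative is the Fréchet derivative applied to `x/‖x‖`. -/
def SommerfeldRadiation (κ : ℝ) (v : EuclideanSpace ℝ (Fin 2) → ℂ) : Prop :=
  ∀ ε > (0 : ℝ), ∃ R₀ > (0 : ℝ), ∀ x : EuclideanSpace ℝ (Fin 2), R₀ ≤ ‖x‖ →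
    Real.sqrt ‖x‖ * ‖fderiv ℝ v x (‖x‖⁻¹ • x) - Complex.I * κ * v x‖ ≤ ε

open MeasureTheory Filter Topology

theorem real_mode (κ m : ℝ) (hκ : 0 < κ) (b b1 b2 : ℝ → ℝ)
    (h1 : ∀ r, HasDerivAt b (b1 r) r) (h2 : ∀ r, HasDerivAt b1 (b2 r) r)
    (hode : ∀ r, r^2 * b2 r + r * b1 r + (κ^2 * r^2 - m) * b r = 0)
    (ht : Tendsto (fun r => r * (b1 r ^ 2 + κ^2 * b r ^2)) atTop (𝓝 0)) :
    ∀ r > 0, b r = 0 := by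
  set C := |m - 1/4| / κ with hC
  set F : ℝ → ℝ := fun r => r * b1 r ^ 2 + b r * b1 r + b r ^ 2 / (4 * r) + κ^2 * r * b r ^ 2 with hF
  set F' : ℝ → ℝ := fun r => 2 * (m - 1/4) / r^2 * (b r ^2 / 2 + r * (b r * b1 r)) with hF'
  have hFd : ∀ r > 0, HasDerivAt F (F' r) r := by
    intro r hr
    have hb := h1 r
    have hb1 := h2 r
    have hi := hasDerivAt_id' r
    have := (((hi.mul (hb1.pow 2)).add (hb.mul hb1)).add ((hb.pow 2).div (hi.const_mul 4) (by positivity))).add ((hi.const_mul (κ^2)).mul (hb.pow 2))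
    refine this.congr_deriv ?_
    have h0 : b2 r = (-(r * b1 r) - (κ^2 * r^2 - m) * b r) / r^2 := by
      field_simp; linarith [hode r]
    simp only [hF', h0, Pi.pow_apply]
    field_simp
    ring
  have hFsq : ∀ r > 0, F r = r * (b1 r + b r / (2 * r))^2 + κ^2 * r * b r ^ 2 := by
    intro r hr
    simp only [hF]; field_simp; ring
  have hF0 : ∀ r > 0, κ^2 * r * b r ^ 2 ≤ F r := by
    intro r hr
    rw [hFsq r hr]; nlinarith [mul_nonneg hr.le (sq_nonneg (b1 r + b r / (2 * r)))]
  have hbound : ∀ r > 0, 0 ≤ F' r + C / r^2 * F r := by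
    intro r hr
    have e1 : b r ^2 / 2 + r * (b r * b1 r) = r * b r * (b1 r + b r / (2 * r)) := by field_simp; ring
    have : |F' r| ≤ C / r^2 * F r := by
      simp only [hF', e1, hFsq r hr, hC]
      set y := b1 r + b r / (2 * r)
      rw [abs_mul, abs_div, abs_mul, abs_of_pos (show (0:ℝ) < 2 by norm_num), abs_of_pos (show 0 < r^2 by positivity)]
      have e2 : |r * b r * y| * (2 * κ) ≤ r * y^2 + κ^2 * r * b r ^2 := by
        rw [mul_assoc, abs_mul, abs_of_pos hr]
        have : |b r * y| * (2 * κ) ≤ y^2 + κ^2 * b r^2 := by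
          rw [abs_mul, ← sq_abs (b r), ← sq_abs y]; nlinarith [sq_nonneg (|y| - κ * |b r|)]
        nlinarith
      calc 2 * |m - 1/4| / r^2 * |r * b r * y| = |m - 1/4| / κ / r^2 * (|r * b r * y| * (2 * κ)) := by field_simp
        _ ≤ _ := by gcongr
    linarith [neg_abs_le (F' r)]
  set G : ℝ → ℝ := fun r => F r * Real.exp (-(C / r)) with hG
  have hGd : ∀ r > 0, HasDerivAt G ((F' r + C / r^2 * F r) * Real.exp (-(C / r))) r := by
    intro r hr
    have hi := ((hasDerivAt_const r C).div (hasDerivAt_id' r) hr.ne').neg.exp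
    refine ((hFd r hr).mul hi).congr_deriv ?_
    simp only [Pi.div_apply, Pi.neg_apply]
    field_simp
    ring
  have hmono : MonotoneOn G (Set.Ioi 0) := by
    apply monotoneOn_of_deriv_nonneg (convex_Ioi 0)
    · exact fun r hr => (hGd r hr).continuousAt.continuousWithinAt
    · rw [interior_Ioi]; exact fun r hr => (hGd r hr).differentiableAt.differentiableWithinAt
    · rw [interior_Ioi]; intro r hr
      rw [(hGd r hr).deriv]
      exact mul_nonneg (hbound r hr) (Real.exp_pos _).le
  have hC0 : 0 ≤ C := by positivity
  have hFt : Tendsto F atTop (𝓝 0) := by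
    have := ht.const_mul (2 + 1/κ^2)
    rw [mul_zero] at this
    refine squeeze_zero' ?_ ?_ this
    · filter_upwards [eventually_gt_atTop 0] with r hr
      exact le_trans (by positivity) (hF0 r hr)
    · filter_upwards [eventually_ge_atTop 1] with r hr
      have hr0 : 0 < r := by linarith
      have k1 : b r * b1 r ≤ r * b1 r ^2 + r * b r^2 / 4 := by
        nlinarith [sq_nonneg (b1 r - b r / 2), sq_nonneg (b r), sq_nonneg (b1 r)]
      have k2 : b r^2 / (4 * r) ≤ r * b r^2 / 4 := by
        rw [div_le_div_iff₀ (by positivity) (by positivity)]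
        have : b r ^2 * 1 ≤ b r^2 * r^2 := by gcongr; nlinarith
        nlinarith
      have k3 : (2 + 1/κ^2) * (r * (b1 r ^ 2 + κ^2 * b r ^2)) = 2 * r * b1 r^2 + 2 * κ^2 * r * b r^2 + r * b1 r^2 / κ^2 + r * b r^2 := by
        field_simp; ring
      rw [k3]; simp only [hF]
      have : 0 ≤ r * b1 r^2 / κ^2 := by positivity
      have : 0 ≤ κ^2 * r * b r^2 := by positivity
      have : 0 ≤ r * b r^2 := by positivity
      linarith
  intro r hr
  have hle : G r ≤ 0 := by
    refine ge_of_tendsto hFt ?_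
    filter_upwards [eventually_ge_atTop r] with s hs
    have hs0 : 0 < s := by linarith
    refine (hmono hr hs0 hs).trans ?_
    have : 0 ≤ F s := le_trans (by positivity) (hF0 s hs0)
    apply mul_le_of_le_one_right this
    rw [Real.exp_le_one_iff]
    have : 0 ≤ C / s := by positivity
    linarith
  have : F r ≤ 0 := by
    by_contra h
    push Not at h
    have : 0 < G r := mul_pos h (Real.exp_pos _)
    linarith
  have h3 := (hF0 r hr).trans this
  have : b r ^ 2 ≤ 0 := by
    by_contra h
    push Not at h
    have : 0 < κ^2 * r * b r^2 := by positivity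
    linarith
  exact pow_eq_zero_iff (two_ne_zero) |>.1 (le_antisymm this (sq_nonneg _))

theorem complex_mode (κ m : ℝ) (hκ : 0 < κ) (a a1 a2 : ℝ → ℂ)
    (h1 : ∀ r, HasDerivAt a (a1 r) r) (h2 : ∀ r, HasDerivAt a1 (a2 r) r)
    (hode : ∀ r : ℝ, (r:ℂ)^2 * a2 r + r * a1 r + (κ^2 * r^2 - m) * a r = 0)
    (ht : Tendsto (fun r : ℝ => r * ‖a1 r - Complex.I * κ * a r‖^2) atTop (𝓝 0)) :
    ∀ r > 0, a r = 0 := by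
  have re1 : ∀ r, HasDerivAt (fun r => (a r).re) (a1 r).re r := fun r =>
    Complex.reCLM.hasFDerivAt.comp_hasDerivAt r (h1 r)
  have re2 : ∀ r, HasDerivAt (fun r => (a1 r).re) (a2 r).re r := fun r =>
    Complex.reCLM.hasFDerivAt.comp_hasDerivAt r (h2 r)
  have im1 : ∀ r, HasDerivAt (fun r => (a r).im) (a1 r).im r := fun r =>
    Complex.imCLM.hasFDerivAt.comp_hasDerivAt r (h1 r)
  have im2 : ∀ r, HasDerivAt (fun r => (a1 r).im) (a2 r).im r := fun r =>
    Complex.imCLM.hasFDerivAt.comp_hasDerivAt r (h2 r)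
  have oder : ∀ r : ℝ, r^2 * (a2 r).re + r * (a1 r).re + (κ^2 * r^2 - m) * (a r).re = 0 := by
    intro r
    have := congrArg Complex.re (hode r)
    have e : (r:ℂ)^2 * a2 r + r * a1 r + (κ^2 * r^2 - m) * a r =
      ((r^2 : ℝ) : ℂ) * a2 r + (r : ℝ) * a1 r + ((κ^2 * r^2 - m : ℝ) : ℂ) * a r := by push_cast; ring
    rw [e] at this
    simpa only [Complex.add_re, Complex.re_ofReal_mul, Complex.zero_re] using this
  have odei : ∀ r : ℝ, r^2 * (a2 r).im + r * (a1 r).im + (κ^2 * r^2 - m) * (a r).im = 0 := by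
    intro r
    have := congrArg Complex.im (hode r)
    have e : (r:ℂ)^2 * a2 r + r * a1 r + (κ^2 * r^2 - m) * a r =
      ((r^2 : ℝ) : ℂ) * a2 r + (r : ℝ) * a1 r + ((κ^2 * r^2 - m : ℝ) : ℂ) * a r := by push_cast; ring
    rw [e] at this
    simpa only [Complex.add_im, Complex.im_ofReal_mul, Complex.zero_im] using this
  set W : ℝ → ℝ := fun r => r * ((a1 r).im * (a r).re - (a1 r).re * (a r).im) with hW
  have hWd : ∀ r, HasDerivAt W (((a1 r).im * (a r).re - (a1 r).re * (a r).im) +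
      r * ((a2 r).im * (a r).re - (a2 r).re * (a r).im)) r := by
    intro r
    refine ((hasDerivAt_id' r).mul (((im2 r).mul (re1 r)).sub ((re2 r).mul (im1 r)))).congr_deriv ?_
    simp only [Pi.mul_apply, Pi.sub_apply]
    ring
  have hWd0 : ∀ r > 0, HasDerivAt W 0 r := by
    intro r hr
    refine (hWd r).congr_deriv ?_
    have h : r * (((a1 r).im * (a r).re - (a1 r).re * (a r).im) +
      r * ((a2 r).im * (a r).re - (a2 r).re * (a r).im)) = 0 := by
      linear_combination (a r).re * odei r - (a r).im * oder r
    exact (mul_eq_zero.1 h).resolve_left hr.ne'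
  have hWc : ContinuousOn W (Set.Ici 0) := fun r _ => (hWd r).continuousAt.continuousWithinAt
  have hWdiff : DifferentiableOn ℝ W (interior (Set.Ici 0)) := fun r _ => (hWd r).differentiableAt.differentiableWithinAt
  have hW0 : ∀ r > 0, W r = 0 := by
    intro r hr
    have m1 : MonotoneOn W (Set.Ici 0) := by
      apply monotoneOn_of_deriv_nonneg (convex_Ici 0) hWc hWdiff
      rw [interior_Ici]; intro s hs; rw [(hWd0 s hs).deriv]
    have m2 : AntitoneOn W (Set.Ici 0) := by
      apply antitoneOn_of_deriv_nonpos (convex_Ici 0) hWc hWdiff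
      rw [interior_Ici]; intro s hs; rw [(hWd0 s hs).deriv]
    have z : W 0 = 0 := by simp [hW]
    have k1 := m1 (Set.self_mem_Ici) (Set.mem_Ici.2 hr.le) hr.le
    have k2 := m2 (Set.self_mem_Ici) (Set.mem_Ici.2 hr.le) hr.le
    linarith
  have key : ∀ r > 0, r * ‖a1 r - Complex.I * κ * a r‖^2 =
      r * ((a1 r).re^2 + κ^2 * (a r).re^2) + r * ((a1 r).im^2 + κ^2 * (a r).im^2) := by
    intro r hr
    have := hW0 r hr
    simp only [hW] at this
    rw [← Complex.normSq_eq_norm_sq, Complex.normSq_apply]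
    simp only [Complex.sub_re, Complex.sub_im, Complex.mul_re, Complex.mul_im, Complex.I_re, Complex.I_im,
      Complex.ofReal_re, Complex.ofReal_im]
    linear_combination (-2 * κ) * this
  have tr : Tendsto (fun r => r * ((a1 r).re^2 + κ^2 * (a r).re^2)) atTop (𝓝 0) := by
    refine squeeze_zero' ?_ ?_ ht
    · filter_upwards [eventually_gt_atTop 0] with r hr
      positivity
    · filter_upwards [eventually_gt_atTop 0] with r hr
      rw [key r hr]
      have : 0 ≤ r * ((a1 r).im^2 + κ^2 * (a r).im^2) := by positivity
      linarith
  have ti : Tendsto (fun r => r * ((a1 r).im^2 + κ^2 * (a r).im^2)) atTop (𝓝 0) := by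
    refine squeeze_zero' ?_ ?_ ht
    · filter_upwards [eventually_gt_atTop 0] with r hr
      positivity
    · filter_upwards [eventually_gt_atTop 0] with r hr
      rw [key r hr]
      have : 0 ≤ r * ((a1 r).re^2 + κ^2 * (a r).re^2) := by positivity
      linarith
  intro r hr
  exact Complex.ext (real_mode κ m hκ _ _ _ re1 re2 oder tr r hr) (real_mode κ m hκ _ _ _ im1 im2 odei ti r hr)

theorem param_deriv (f f' : ℝ → ℝ → ℂ) (hc : Continuous (Function.uncurry f))
    (hc' : Continuous (Function.uncurry f'))
    (hd : ∀ r t : ℝ, HasDerivAt (fun r => f r t) (f' r t) r) (A B : ℝ) (r : ℝ) :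
    HasDerivAt (fun r => ∫ t in A..B, f r t) (∫ t in A..B, f' r t) r := by
  obtain ⟨C, hC⟩ := ((isCompact_closedBall r 1).prod (isCompact_uIcc (a := A) (b := B))).exists_bound_of_continuousOn hc'.continuousOn
  have cf : ∀ r, Continuous (f r) := fun r => hc.comp (by fun_prop : Continuous fun t => (r, t))
  have cf' : ∀ r, Continuous (f' r) := fun r => hc'.comp (by fun_prop : Continuous fun t => (r, t))
  refine (intervalIntegral.hasDerivAt_integral_of_dominated_loc_of_deriv_le (bound := fun _ => C)
    (Metric.closedBall_mem_nhds r one_pos) (Eventually.of_forall fun s => (cf s).aestronglyMeasurable)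
    ((cf r).intervalIntegrable _ _) (cf' r).aestronglyMeasurable ?_ (by simp) ?_).2
  · exact Eventually.of_forall fun t ht s hs => hC (s, t) ⟨hs, Set.uIoc_subset_uIcc ht⟩
  · exact Eventually.of_forall fun t ht s hs => hd s t

theorem fourier_uniq_aux (g : ℝ → ℂ) (hg : Continuous g) (hp : Function.Periodic g (2 * Real.pi))
    (h : ∀ n : ℤ, ∫ t in (0:ℝ)..(2 * Real.pi), g t * Complex.exp (-(n * t * Complex.I)) = 0) : ∀ t, g t = 0 := by
  have : Fact (0 < 2 * Real.pi) := ⟨by positivity⟩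
  have hcont : Continuous hp.lift := by
    exact continuous_coinduced_dom.2 hg
  let G : C(AddCircle (2 * Real.pi), ℂ) := ⟨hp.lift, hcont⟩
  have hco : fourierCoeff G = 0 := by
    ext n
    rw [fourierCoeff_eq_intervalIntegral _ n 0, zero_add]
    have : ∀ x : ℝ, fourier (-n) (x : AddCircle (2 * Real.pi)) • G x = g x * Complex.exp (-(n * x * Complex.I)) := by
      intro x
      have e : G x = g x := rfl
      rw [e, fourier_coe_apply, smul_eq_mul, mul_comm]
      congr 2
      have : (Real.pi : ℂ) ≠ 0 := by exact_mod_cast Real.pi_ne_zero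
      push_cast
      field_simp
    simp_rw [this, h n]
    simp
  intro t
  have := has_pointwise_sum_fourier_series_of_summable (f := G) (by rw [hco]; exact summable_zero) (t : AddCircle (2 * Real.pi))
  rw [hco] at this
  simp only [Pi.zero_apply, zero_smul] at this
  exact (this.unique hasSum_zero)

theorem parts2 (g g1 g2 : ℝ → ℂ) (h1 : ∀ t, HasDerivAt g (g1 t) t) (h2 : ∀ t, HasDerivAt g1 (g2 t) t)
    (hc : Continuous g2) (p : g (2 * Real.pi) = g 0) (p1 : g1 (2 * Real.pi) = g1 0) (n : ℤ) :
    ∫ t in (0:ℝ)..(2 * Real.pi), g2 t * Complex.exp (-(n * t * Complex.I)) =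
    -(n:ℂ)^2 * ∫ t in (0:ℝ)..(2 * Real.pi), g t * Complex.exp (-(n * t * Complex.I)) := by
  have he : ∀ t : ℝ, HasDerivAt (fun t : ℝ => Complex.exp (-(n * t * Complex.I))) (-(n * Complex.I) * Complex.exp (-(n * t * Complex.I))) t := by
    intro t
    have := ((((hasDerivAt_id' t).ofReal_comp.const_mul (n:ℂ)).mul_const Complex.I).neg).cexp
    refine this.congr_deriv ?_
    simp; ring
  have e0 : Complex.exp (-(n * (2 * Real.pi : ℝ) * Complex.I)) = 1 := by
    rw [Complex.exp_eq_one_iff]; exact ⟨-n, by push_cast; ring⟩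
  have hg1c : Continuous g1 := continuous_iff_continuousAt.2 fun t => (h2 t).continuousAt
  have step : ∀ (f f1 : ℝ → ℂ), (∀ t, HasDerivAt f (f1 t) t) → Continuous f1 → f (2 * Real.pi) = f 0 →
     ∫ t in (0:ℝ)..(2 * Real.pi), f1 t * Complex.exp (-(n * t * Complex.I)) =
     (n * Complex.I) * ∫ t in (0:ℝ)..(2 * Real.pi), f t * Complex.exp (-(n * t * Complex.I)) := by
    intro f f1 hf hfc hp
    have := intervalIntegral.integral_mul_deriv_eq_deriv_mul (a := 0) (b := 2 * Real.pi) (fun t _ => hf t) (fun t _ => he t)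
      (hfc.intervalIntegrable _ _) (Continuous.intervalIntegrable (by fun_prop) _ _)
    rw [e0, hp] at this
    simp only [mul_left_comm _ (-(n * Complex.I))] at this
    rw [intervalIntegral.integral_const_mul] at this
    simp at this
    linear_combination -this
  rw [step g1 g2 h2 hc p1, step g g1 h1 hg1c p]
  linear_combination (n:ℂ)^2 * (∫ t in (0:ℝ)..(2 * Real.pi), g t * Complex.exp (-(n * t * Complex.I))) * Complex.I_sq


def pe (t : ℝ) : EuclideanSpace ℝ (Fin 2) :=
  Real.cos t • EuclideanSpace.single 0 1 + Real.sin t • EuclideanSpace.single 1 1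

def pf (t : ℝ) : EuclideanSpace ℝ (Fin 2) :=
  (-Real.sin t) • EuclideanSpace.single 0 1 + Real.cos t • EuclideanSpace.single 1 1

theorem pe_deriv (t : ℝ) : HasDerivAt pe (pf t) t :=
  ((Real.hasDerivAt_cos t).smul_const _).add ((Real.hasDerivAt_sin t).smul_const _)

theorem pf_deriv (t : ℝ) : HasDerivAt pf (-pe t) t := by
  refine (((Real.hasDerivAt_sin t).neg.smul_const _).add
    ((Real.hasDerivAt_cos t).smul_const _)).congr_deriv ?_
  simp only [pe, neg_smul]; abel

theorem pe_norm (t : ℝ) : ‖pe t‖ = 1 := by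
  rw [EuclideanSpace.norm_eq, Real.sqrt_eq_one]
  simp [pe, Fin.sum_univ_two]

theorem pe_surj (x : EuclideanSpace ℝ (Fin 2)) : ∃ t, x = ‖x‖ • pe t := by
  refine ⟨Complex.arg ⟨x 0, x 1⟩, ?_⟩
  have hn : ‖x‖ = ‖(⟨x 0, x 1⟩ : ℂ)‖ := by
    rw [EuclideanSpace.norm_eq, Complex.norm_eq_sqrt_sq_add_sq]; simp [Fin.sum_univ_two]
  ext i
  fin_cases i
  · simp [pe, hn, Complex.norm_mul_cos_arg]
  · simp [pe, hn, Complex.norm_mul_sin_arg]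

/-- An entire (C² on all of `ℝ²`) solution of the Helmholtz equation that satisfies the
Sommerfeld radiation condition vanishes identically. -/
theorem entire_radiating_solution_is_zero (κ : ℝ) (hκ : 0 < κ)
    (v : EuclideanSpace ℝ (Fin 2) → ℂ)
    (hv : ContDiff ℝ 2 v)
    (hHelm : ∀ x, lap v x + (κ : ℂ) ^ 2 * v x = 0)
    (hrad : SommerfeldRadiation κ v) :
    ∀ x, v x = 0 := by
  have hvd : Differentiable ℝ v := hv.differentiable (by norm_num)
  have hD : ContDiff ℝ 1 (fderiv ℝ v) := hv.fderiv_right (by norm_num)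
  have hDd : Differentiable ℝ (fderiv ℝ v) := hD.differentiable (by norm_num)
  have hD2 : Continuous (fderiv ℝ (fderiv ℝ v)) := hD.continuous_fderiv (by norm_num)
  have hDc := hD.continuous
  have hvc := hv.continuous
  have cpe : Continuous pe := continuous_iff_continuousAt.2 fun t => (pe_deriv t).continuousAt
  have cpf : Continuous pf := continuous_iff_continuousAt.2 fun t => (pf_deriv t).continuousAt
  set D := fderiv ℝ v with hDdef
  set H := fderiv ℝ D with hHdef
  have hlap : ∀ x t, lap v x = H x (pe t) (pe t) + H x (pf t) (pf t) := by
    intro x t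
    have k : ∀ w : EuclideanSpace ℝ (Fin 2), fderiv ℝ (fun y => D y w) x w = H x w w := by
      intro w
      have := (hDd x).hasFDerivAt.clm_apply (hasFDerivAt_const w x)
      rw [this.fderiv]
      simp [hHdef]
    simp only [lap, Fin.sum_univ_two, ← hDdef, k]
    simp only [pe, pf, map_add, map_smul, add_apply, smul_apply, Complex.real_smul]
    have cs : (Real.cos t : ℂ)^2 + (Real.sin t : ℂ)^2 = 1 := by exact_mod_cast Real.cos_sq_add_sin_sq t
    push_cast at cs ⊢
    linear_combination -(H x (EuclideanSpace.single 0 1) (EuclideanSpace.single 0 1) + H x (EuclideanSpace.single 1 1) (EuclideanSpace.single 1 1)) * cs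
  -- polar derivatives
  have pr : ∀ r t : ℝ, HasDerivAt (fun r : ℝ => r • pe t) (pe t) r := by
    intro r t
    simpa using (hasDerivAt_id' r).smul_const (pe t)
  have pt : ∀ r t : ℝ, HasDerivAt (fun t : ℝ => r • pe t) (r • pf t) t := fun r t => by
    exact (pe_deriv t).const_smul r
  have ur : ∀ r t : ℝ, HasDerivAt (fun r : ℝ => v (r • pe t)) (D (r • pe t) (pe t)) r := fun r t =>
    (hvd _).hasFDerivAt.comp_hasDerivAt r (pr r t)
  have urr : ∀ r t : ℝ, HasDerivAt (fun r : ℝ => D (r • pe t) (pe t)) (H (r • pe t) (pe t) (pe t)) r := by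
    intro r t
    have h1 : HasDerivAt (fun r : ℝ => D (r • pe t)) (H (r • pe t) (pe t)) r :=
      (hDd _).hasFDerivAt.comp_hasDerivAt r (pr r t)
    simpa using h1.clm_apply (hasDerivAt_const r (pe t))
  have ut : ∀ r t : ℝ, HasDerivAt (fun t : ℝ => v (r • pe t)) (D (r • pe t) (r • pf t)) t := fun r t =>
    (hvd _).hasFDerivAt.comp_hasDerivAt t (pt r t)
  have utt : ∀ r t : ℝ, HasDerivAt (fun t : ℝ => D (r • pe t) (r • pf t))
      (H (r • pe t) (r • pf t) (r • pf t) + D (r • pe t) (r • (-pe t))) t := by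
    intro r t
    have h1 : HasDerivAt (fun t : ℝ => D (r • pe t)) (H (r • pe t) (r • pf t)) t :=
      (hDd _).hasFDerivAt.comp_hasDerivAt t (pt r t)
    exact h1.clm_apply ((pf_deriv t).const_smul r)
  have pep : Function.Periodic pe (2 * Real.pi) := fun t => by simp [pe]
  have pfp : Function.Periodic pf (2 * Real.pi) := fun t => by simp [pf]
  have hmode : ∀ n : ℤ, ∀ r > (0:ℝ), ∫ t in (0:ℝ)..(2 * Real.pi), v (r • pe t) * Complex.exp (-(n * t * Complex.I)) = 0 := by
    intro n
    have c0 : Continuous (Function.uncurry fun (r t : ℝ) => v (r • pe t) * Complex.exp (-(n * t * Complex.I))) := by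
      simp only [Function.uncurry_def]; fun_prop
    have c1 : Continuous (Function.uncurry fun (r t : ℝ) => D (r • pe t) (pe t) * Complex.exp (-(n * t * Complex.I))) := by
      simp only [Function.uncurry_def]; fun_prop
    have c2 : Continuous (Function.uncurry fun (r t : ℝ) => H (r • pe t) (pe t) (pe t) * Complex.exp (-(n * t * Complex.I))) := by
      simp only [Function.uncurry_def]; fun_prop
    have s0 : ∀ r : ℝ, Continuous fun t : ℝ => v (r • pe t) * Complex.exp (-(n * t * Complex.I)) := by
      intro r; fun_prop
    have s1 : ∀ r : ℝ, Continuous fun t : ℝ => D (r • pe t) (pe t) * Complex.exp (-(n * t * Complex.I)) := by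
      intro r; fun_prop
    have s2 : ∀ r : ℝ, Continuous fun t : ℝ => H (r • pe t) (pe t) (pe t) * Complex.exp (-(n * t * Complex.I)) := by
      intro r; fun_prop
    refine complex_mode κ ((n:ℝ)^2) hκ _ (fun r => ∫ t in (0:ℝ)..(2 * Real.pi), D (r • pe t) (pe t) * Complex.exp (-(n * t * Complex.I)))
      (fun r => ∫ t in (0:ℝ)..(2 * Real.pi), H (r • pe t) (pe t) (pe t) * Complex.exp (-(n * t * Complex.I)))
      (param_deriv _ _ c0 c1 (fun r t => (ur r t).mul_const _) _ _)
      (param_deriv _ _ c1 c2 (fun r t => (urr r t).mul_const _) _ _) ?_ ?_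
    · intro r
      have hp := parts2 _ _ _ (ut r) (utt r) (by fun_prop) (by rw [pep.eq]) (by rw [pep.eq, pfp.eq]) n
      have heq : ∀ t : ℝ, (H (r • pe t) (r • pf t) (r • pf t) + D (r • pe t) (r • (-pe t))) * Complex.exp (-(n * t * Complex.I))
          = (-(r:ℂ)^2) * (H (r • pe t) (pe t) (pe t) * Complex.exp (-(n * t * Complex.I)))
            - (r:ℂ) * (D (r • pe t) (pe t) * Complex.exp (-(n * t * Complex.I)))
            - (κ^2 * r^2 : ℂ) * (v (r • pe t) * Complex.exp (-(n * t * Complex.I))) := by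
        intro t
        have := hHelm (r • pe t)
        rw [hlap _ t] at this
        simp only [map_smul, map_neg, smul_apply, Complex.real_smul]
        linear_combination (r:ℂ)^2 * Complex.exp (-(n * t * Complex.I)) * this
      simp_rw [heq] at hp
      have i0 := (s0 r).intervalIntegrable (μ := volume) 0 (2 * Real.pi)
      have i1 := (s1 r).intervalIntegrable (μ := volume) 0 (2 * Real.pi)
      have i2 := (s2 r).intervalIntegrable (μ := volume) 0 (2 * Real.pi)
      rw [intervalIntegral.integral_sub ((i2.const_mul _).sub (i1.const_mul _)) (i0.const_mul _),
        intervalIntegral.integral_sub (i2.const_mul _) (i1.const_mul _),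
        intervalIntegral.integral_const_mul, intervalIntegral.integral_const_mul, intervalIntegral.integral_const_mul] at hp
      push_cast
      linear_combination -hp
    · rw [Metric.tendsto_atTop]
      intro ε hε
      set δ := Real.sqrt (ε / 2) / (2 * Real.pi) with hδ
      have hδ0 : 0 < δ := by positivity
      obtain ⟨R, hR, hb⟩ := hrad δ hδ0
      refine ⟨R, fun r hr => ?_⟩
      have hr0 : 0 < r := by linarith
      have hpt : ∀ t, ‖D (r • pe t) (pe t) - Complex.I * κ * v (r • pe t)‖ ≤ δ / Real.sqrt r := by
        intro t
        have hn : ‖r • pe t‖ = r := by rw [norm_smul, pe_norm, mul_one, Real.norm_of_nonneg hr0.le]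
        have := hb (r • pe t) (by rw [hn]; exact hr)
        rw [hn, inv_smul_smul₀ hr0.ne'] at this
        rw [le_div_iff₀ (by positivity), mul_comm]
        exact this
      have i0 := (s0 r).intervalIntegrable (μ := volume) 0 (2 * Real.pi)
      have i1 := (s1 r).intervalIntegrable (μ := volume) 0 (2 * Real.pi)
      have hint : ‖(∫ t in (0:ℝ)..(2 * Real.pi), D (r • pe t) (pe t) * Complex.exp (-(n * t * Complex.I))) -
          Complex.I * κ * ∫ t in (0:ℝ)..(2 * Real.pi), v (r • pe t) * Complex.exp (-(n * t * Complex.I))‖ ≤ δ / Real.sqrt r * (2 * Real.pi) := by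
        rw [← intervalIntegral.integral_const_mul, ← intervalIntegral.integral_sub i1 (i0.const_mul _)]
        refine (intervalIntegral.norm_integral_le_of_norm_le_const (C := δ / Real.sqrt r) ?_).trans ?_
        · intro t _
          have e : D (r • pe t) (pe t) * Complex.exp (-(n * t * Complex.I)) - Complex.I * κ * (v (r • pe t) * Complex.exp (-(n * t * Complex.I)))
            = (D (r • pe t) (pe t) - Complex.I * κ * v (r • pe t)) * Complex.exp (-(n * t * Complex.I)) := by ring
          have e1 : ‖Complex.exp (-(n * t * Complex.I))‖ = 1 := by
            rw [Complex.norm_exp]; simp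
          rw [e, norm_mul, e1, mul_one]
          exact hpt t
        · rw [sub_zero, abs_of_pos (by positivity)]
      rw [Real.dist_eq, sub_zero, abs_of_nonneg (by positivity)]
      calc _ ≤ r * (δ / Real.sqrt r * (2 * Real.pi))^2 := by gcongr
        _ = ε / 2 := by
          have h1 := Real.sq_sqrt hr0.le
          have h2 := Real.sq_sqrt (show 0 ≤ ε / 2 by positivity)
          rw [hδ, mul_pow, div_pow, div_pow, h1, h2]
          field_simp
        _ < ε := by linarith
  have hpos : ∀ r > (0:ℝ), ∀ t, v (r • pe t) = 0 := by
    intro r hr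
    exact fourier_uniq_aux (fun t => v (r • pe t)) (by fun_prop) (fun t => by simp only [pep t]) (fun n => hmode n r hr)
  have hne : ∀ x, x ≠ 0 → v x = 0 := by
    intro x hx
    obtain ⟨t, ht⟩ := pe_surj x
    rw [ht]; exact hpos _ (norm_pos_iff.2 hx) t
  intro x
  by_cases hx : x = 0
  · have hc : Continuous fun r : ℝ => v (r • pe 0) := by fun_prop
    have h0 : Tendsto (fun r : ℝ => v (r • pe 0)) (𝓝[>] 0) (𝓝 (v ((0:ℝ) • pe 0))) :=
      (hc.tendsto 0).mono_left nhdsWithin_le_nhds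
    have h1 : Tendsto (fun r : ℝ => v (r • pe 0)) (𝓝[>] 0) (𝓝 0) := by
      refine tendsto_const_nhds.congr' ?_
      filter_upwards [self_mem_nhdsWithin] with r hr
      exact (hpos r hr 0).symm
    rw [hx, ← zero_smul ℝ (pe 0)]
    exact tendsto_nhds_unique h0 h1
  · exact hne x hx

end
end

section
/- (Weak uniqueness, Theorem 3.1.) Let κ > 0 and let D₁, D₂ ⊆ ℝ² be bounded open sets such that ℝ² \ (cl(D₁) ∪ cl(D₂)) is connected. For i = 1, 2 let vᵢ : ℝ² → ℂ be of class C² on ℝ² \ cl(Dᵢ), satisfy Δvᵢ + κ²vᵢ = 0 there, and satisfy the Sommerfeld radiation condition for wavenumber κ. Suppose there exists a continuous function v∞ : S¹ → ℂ that is the far-field pattern of both v₁ and v₂, and suppose v∞ is not identically zero on S¹. Then the closures of the two obstacles must intersect: cl(D₁) ∩ cl(D₂) ≠ ∅. -/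
noncomputable section

/-- The normalizing constant `c_κ = e^{iπ/4}/√(8πκ)`. -/
def farFieldConst (κ : ℝ) : ℂ :=
  Complex.exp (Complex.I * Real.pi / 4) / (Real.sqrt (8 * Real.pi * κ) : ℂ)

/-- `vInf` is the far-field pattern of `v` for wavenumber `κ`:
`sup_{‖θ‖=1} |r^{1/2} e^{−iκr} v(rθ) − c_κ vInf(θ)| → 0` as `r → ∞`. -/
def IsFarFieldPattern (κ : ℝ) (v vInf : EuclideanSpace ℝ (Fin 2) → ℂ) : Prop :=
  ∀ ε > (0 : ℝ), ∃ R₀ : ℝ, ∀ r : ℝ, R₀ ≤ r →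
    ∀ θ : EuclideanSpace ℝ (Fin 2), ‖θ‖ = 1 →
      ‖(Real.sqrt r : ℂ) * Complex.exp (-Complex.I * κ * r) * v (r • θ)
        - farFieldConst κ * vInf θ‖ ≤ ε


namespace WU

lemma energy_bound (κ : ℝ) (hκ : 0 < κ) (c r : ℝ) (hr : 0 < r) (f g : ℂ) :
    |2 * inner ℝ g ((((c / r ^ 2 - κ ^ 2 : ℝ)) : ℂ) * f) + κ ^ 2 * (2 * inner ℝ f g)|
      ≤ (|c| / κ) / r ^ 2 * (‖g‖ ^ 2 + κ ^ 2 * ‖f‖ ^ 2) := by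
  have h1 : 2 * inner ℝ g ((((c / r ^ 2 - κ ^ 2 : ℝ)) : ℂ) * f) + κ ^ 2 * (2 * inner ℝ f g)
      = 2 * (c / r ^ 2) * inner ℝ g f := by
    rw [← Complex.real_smul, real_inner_smul_right, real_inner_comm g f]
    ring
  rw [h1, abs_mul, abs_mul, abs_div, abs_two, abs_of_pos (by positivity : 0 < r ^ 2)]
  have h2 : |inner ℝ g f| ≤ ‖g‖ * ‖f‖ := abs_real_inner_le_norm g f
  have h3 : 2 * (κ * (‖g‖ * ‖f‖)) ≤ ‖g‖ ^ 2 + κ ^ 2 * ‖f‖ ^ 2 := by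
    nlinarith [sq_nonneg (‖g‖ - κ * ‖f‖)]
  calc 2 * (|c| / r ^ 2) * |inner ℝ g f| ≤ 2 * (|c| / r ^ 2) * (‖g‖ * ‖f‖) := by gcongr
    _ = (|c| / κ) / r ^ 2 * (2 * (κ * (‖g‖ * ‖f‖))) := by field_simp
    _ ≤ _ := by gcongr

lemma energy_deriv (κ : ℝ) (c r : ℝ) (f g : ℝ → ℂ)
    (hf : HasDerivAt f (g r) r)
    (hg : HasDerivAt g ((((c / r ^ 2 - κ ^ 2 : ℝ)) : ℂ) * f r) r) :
    HasDerivAt (fun r => ‖g r‖ ^ 2 + κ ^ 2 * ‖f r‖ ^ 2)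
      (2 * inner ℝ (g r) ((((c / r ^ 2 - κ ^ 2 : ℝ)) : ℂ) * f r)
        + κ ^ 2 * (2 * inner ℝ (f r) (g r))) r :=
  hg.norm_sq.add (hf.norm_sq.const_mul _)

lemma exp_deriv (C r : ℝ) (hr : 0 < r) :
    HasDerivAt (fun r : ℝ => Real.exp (-C / r)) (Real.exp (-C / r) * (C / r ^ 2)) r := by
  have := ((hasDerivAt_inv hr.ne').const_mul (-C)).exp
  convert! this using 1
  ring_nf

lemma energy_mono (κ : ℝ) (hκ : 0 < κ) (c : ℝ) (S : Set ℝ) (hS : Convex ℝ S) (hSo : IsOpen S)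
    (hpos : ∀ r ∈ S, 0 < r) (f g : ℝ → ℂ)
    (hf : ∀ r ∈ S, HasDerivAt f (g r) r)
    (hg : ∀ r ∈ S, HasDerivAt g ((((c / r ^ 2 - κ ^ 2 : ℝ)) : ℂ) * f r) r) :
    MonotoneOn (fun r => (‖g r‖ ^ 2 + κ ^ 2 * ‖f r‖ ^ 2) * Real.exp (-(|c| / κ) / r)) S ∧
    AntitoneOn (fun r => (‖g r‖ ^ 2 + κ ^ 2 * ‖f r‖ ^ 2) * Real.exp (-(-(|c| / κ)) / r)) S := by
  have H : ∀ C, ∀ r ∈ S, HasDerivAt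
      (fun r => (‖g r‖ ^ 2 + κ ^ 2 * ‖f r‖ ^ 2) * Real.exp (-C / r)) _ r :=
    fun C r hr => (energy_deriv κ c r f g (hf r hr) (hg r hr)).mul (exp_deriv C r (hpos r hr))
  constructor
  · refine monotoneOn_of_deriv_nonneg hS (fun r hr => (H _ r hr).continuousAt.continuousWithinAt)
      (fun r hr => (H _ r (interior_subset hr)).differentiableAt.differentiableWithinAt) ?_
    intro r hr
    have hr := interior_subset hr
    rw [(H _ r hr).deriv]
    have hb := (abs_le.1 (energy_bound κ hκ c r (hpos r hr) (f r) (g r))).1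
    have := Real.exp_pos (-(|c| / κ) / r)
    nlinarith
  · refine antitoneOn_of_deriv_nonpos hS (fun r hr => (H _ r hr).continuousAt.continuousWithinAt)
      (fun r hr => (H _ r (interior_subset hr)).differentiableAt.differentiableWithinAt) ?_
    intro r hr
    have hr := interior_subset hr
    rw [(H _ r hr).deriv]
    have hb := (abs_le.1 (energy_bound κ hκ c r (hpos r hr) (f r) (g r))).2
    have := Real.exp_pos (-(-(|c| / κ)) / r)
    have e : -(|c| / κ) / r ^ 2 = - ((|c| / κ) / r ^ 2) := by ring
    rw [e]
    nlinarith

/-- zero Cauchy data propagate to the right -/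
lemma ode_zero_right (κ : ℝ) (hκ : 0 < κ) (c : ℝ) (S : Set ℝ) (hS : Convex ℝ S) (hSo : IsOpen S)
    (hpos : ∀ r ∈ S, 0 < r) (f g : ℝ → ℂ)
    (hf : ∀ r ∈ S, HasDerivAt f (g r) r)
    (hg : ∀ r ∈ S, HasDerivAt g ((((c / r ^ 2 - κ ^ 2 : ℝ)) : ℂ) * f r) r)
    (a b : ℝ) (ha : a ∈ S) (hb : b ∈ S) (hab : a ≤ b) (h0 : f a = 0) (h1 : g a = 0) :
    f b = 0 := by
  have h := (energy_mono κ hκ c S hS hSo hpos f g hf hg).2 ha hb hab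
  simp only [h0, h1, norm_zero] at h
  have := Real.exp_pos (-(-(|c| / κ)) / b)
  by_contra hne
  have : 0 < ‖f b‖ := norm_pos_iff.2 hne
  have : 0 < (‖g b‖ ^ 2 + κ ^ 2 * ‖f b‖ ^ 2) * Real.exp (-(-(|c| / κ)) / b) := by positivity
  norm_num at h
  norm_num at this
  linarith

open Filter Topology in
/-- solutions decaying at infinity vanish -/
lemma ode_zero_infty (κ : ℝ) (hκ : 0 < κ) (c : ℝ) (A : ℝ) (hA : 0 ≤ A) (f g : ℝ → ℂ)
    (hf : ∀ r ∈ Set.Ioi A, HasDerivAt f (g r) r)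
    (hg : ∀ r ∈ Set.Ioi A, HasDerivAt g ((((c / r ^ 2 - κ ^ 2 : ℝ)) : ℂ) * f r) r)
    (h0 : Tendsto f atTop (𝓝 0)) (h1 : Tendsto g atTop (𝓝 0)) (r : ℝ) (hr : A < r) : f r = 0 := by
  have h := (energy_mono κ hκ c (Set.Ioi A) (convex_Ioi A) isOpen_Ioi
    (fun r hr => lt_of_le_of_lt hA hr) f g hf hg).1
  have hlim : Tendsto (fun r => (‖g r‖ ^ 2 + κ ^ 2 * ‖f r‖ ^ 2) * Real.exp (-(|c| / κ) / r))
      atTop (𝓝 ((‖(0:ℂ)‖ ^ 2 + κ ^ 2 * ‖(0:ℂ)‖ ^ 2) * Real.exp 0)) := by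
    refine ((h1.norm.pow 2).add ((h0.norm.pow 2).const_mul _)).mul ?_
    exact (Real.continuous_exp.tendsto 0).comp (tendsto_const_nhds.div_atTop tendsto_id)
  have hle := ge_of_tendsto hlim (b := (‖g r‖ ^ 2 + κ ^ 2 * ‖f r‖ ^ 2) * Real.exp (-(|c| / κ) / r))
    (by filter_upwards [eventually_ge_atTop r] with s hs using h hr (lt_of_lt_of_le hr hs) hs)
  by_contra hne
  have : 0 < ‖f r‖ := norm_pos_iff.2 hne
  have : 0 < (‖g r‖ ^ 2 + κ ^ 2 * ‖f r‖ ^ 2) * Real.exp (-(|c| / κ) / r) := by positivity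
  have e : ((‖(0:ℂ)‖ ^ 2 + κ ^ 2 * ‖(0:ℂ)‖ ^ 2) * Real.exp 0) = 0 := by simp
  rw [e] at hle
  linarith

/-- conserved Wronskian -/
lemma wronskian_const (κ : ℝ) (c : ℝ) (f g : ℝ → ℂ)
    (hf : ∀ r ∈ Set.Ioi (0:ℝ), HasDerivAt f (g r) r)
    (hg : ∀ r ∈ Set.Ioi (0:ℝ), HasDerivAt g ((((c / r ^ 2 - κ ^ 2 : ℝ)) : ℂ) * f r) r)
    (a b : ℝ) (ha : 0 < a) (hb : 0 < b) :
    inner ℝ (Complex.I * f a) (g a) = inner ℝ (Complex.I * f b) (g b) := by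
  have H : ∀ r ∈ Set.Ioi (0:ℝ), HasDerivAt (fun r => inner ℝ (Complex.I * f r) (g r)) 0 r := by
    intro r hr
    have := ((hf r hr).const_mul Complex.I).inner ℝ (hg r hr)
    convert! this using 1
    simp only [Complex.inner, map_mul, Complex.conj_I, Complex.mul_re, Complex.mul_im,
      Complex.neg_re, Complex.neg_im, Complex.I_re, Complex.I_im, Complex.conj_re, Complex.conj_im,
      Complex.ofReal_re, Complex.ofReal_im]
    ring
  exact isOpen_Ioi.is_const_of_deriv_eq_zero isPreconnected_Ioi
    (fun r hr => (H r hr).differentiableAt.differentiableWithinAt)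
    (fun r hr => (H r hr).deriv) ha hb

end WU

namespace WU
open Filter Topology MeasureTheory


/-- radial unit vector -/
def er (t : ℝ) : (EuclideanSpace ℝ (Fin 2)) :=
  Real.cos t • EuclideanSpace.single 0 1 + Real.sin t • EuclideanSpace.single 1 1

/-- angular unit vector -/
def et (t : ℝ) : (EuclideanSpace ℝ (Fin 2)) :=
  (-Real.sin t) • EuclideanSpace.single 0 1 + Real.cos t • EuclideanSpace.single 1 1

lemma hasDerivAt_er (t : ℝ) : HasDerivAt er (et t) t :=
  ((Real.hasDerivAt_cos t).smul_const _).add ((Real.hasDerivAt_sin t).smul_const _)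

lemma hasDerivAt_et (t : ℝ) : HasDerivAt et (-er t) t := by
  have := ((Real.hasDerivAt_sin t).neg.smul_const (EuclideanSpace.single 0 1 : (EuclideanSpace ℝ (Fin 2)))).add
    ((Real.hasDerivAt_cos t).smul_const (EuclideanSpace.single 1 1 : (EuclideanSpace ℝ (Fin 2))))
  convert! this using 1
  simp [er]
  abel

lemma continuous_er : Continuous er :=
  continuous_iff_continuousAt.2 fun t => (hasDerivAt_er t).continuousAt

lemma continuous_et : Continuous et :=
  continuous_iff_continuousAt.2 fun t => (hasDerivAt_et t).continuousAt

lemma norm_er (t : ℝ) : ‖er t‖ = 1 := by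
  rw [EuclideanSpace.norm_eq]
  simp [er]

lemma er_periodic : Function.Periodic er (2 * Real.pi) := by
  intro t; simp [er]

lemma et_periodic : Function.Periodic et (2 * Real.pi) := by
  intro t; simp [et]

lemma exists_er (x : (EuclideanSpace ℝ (Fin 2))) : ∃ t, x = ‖x‖ • er t := by
  refine ⟨Complex.arg ⟨x 0, x 1⟩, ?_⟩
  have hn : ‖x‖ = ‖(⟨x 0, x 1⟩ : ℂ)‖ := by
    rw [EuclideanSpace.norm_eq, Complex.norm_eq_sqrt_sq_add_sq]
    simp
  rw [hn]
  ext i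
  fin_cases i
  · simp [er]
  · simp [er]

/-- angular Fourier coefficients -/
def coef (u : (EuclideanSpace ℝ (Fin 2)) → ℂ) (x₀ : (EuclideanSpace ℝ (Fin 2))) (n : ℤ) (r : ℝ) : ℂ :=
  ∫ t in (0:ℝ)..(2 * Real.pi), u (x₀ + r • er t) * Complex.exp (-Complex.I * n * t)

/-- angular Fourier coefficients of the radial derivative -/
def coefD (u : (EuclideanSpace ℝ (Fin 2)) → ℂ) (x₀ : (EuclideanSpace ℝ (Fin 2))) (n : ℤ) (r : ℝ) : ℂ :=
  ∫ t in (0:ℝ)..(2 * Real.pi), fderiv ℝ u (x₀ + r • er t) (er t) * Complex.exp (-Complex.I * n * t)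

lemma hasDerivAt_param (F F' : ℝ → ℝ → ℂ) (S : Set ℝ) (hS : IsOpen S)
    (hF : ∀ r ∈ S, Continuous (F r))
    (hd : ∀ r ∈ S, ∀ t, HasDerivAt (fun r => F r t) (F' r t) r)
    (hF' : ContinuousOn (Function.uncurry F') (S ×ˢ Set.univ)) (r : ℝ) (hr : r ∈ S) :
    HasDerivAt (fun r => ∫ t in (0:ℝ)..(2 * Real.pi), F r t)
      (∫ t in (0:ℝ)..(2 * Real.pi), F' r t) r := by
  obtain ⟨δ, hδ, hsub⟩ := Metric.isOpen_iff.1 hS r hr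
  have hcb : Metric.closedBall r (δ / 2) ⊆ S :=
    (Metric.closedBall_subset_ball (by linarith)).trans hsub
  have hK : IsCompact (Metric.closedBall r (δ / 2) ×ˢ Set.uIcc 0 (2 * Real.pi)) :=
    (isCompact_closedBall r _).prod isCompact_uIcc
  obtain ⟨M, hM⟩ := hK.exists_bound_of_continuousOn
    (hF'.mono (Set.prod_mono hcb (Set.subset_univ _)))
  have hmem : Metric.closedBall r (δ / 2) ∈ 𝓝 r := Metric.closedBall_mem_nhds r (by linarith)
  have hF'r : Continuous (F' r) := by
    rw [← continuousOn_univ]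
    exact hF'.comp (f := fun t => (r, t)) (by fun_prop) (fun t _ => ⟨hr, trivial⟩)
  refine (intervalIntegral.hasDerivAt_integral_of_dominated_loc_of_deriv_le
    (bound := fun _ => M) hmem ?_ ((hF r hr).intervalIntegrable _ _)
    hF'r.aestronglyMeasurable ?_ (by simp) ?_).2
  · filter_upwards [hmem] with s hs using (hF s (hcb hs)).aestronglyMeasurable
  · exact Eventually.of_forall fun t ht s hs => hM (s, t) ⟨hs, Set.uIoc_subset_uIcc ht⟩
  · exact Eventually.of_forall fun t ht s hs => hd s (hcb hs) t

lemma curve2 {E : Type*} [NormedAddCommGroup E] [NormedSpace ℝ E] (L : E → E →L[ℝ] ℂ)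
    (L' : E →L[ℝ] E →L[ℝ] ℂ) (γ w : ℝ → E) (v w' : E) (t : ℝ)
    (hL : HasFDerivAt L L' (γ t)) (hγ : HasDerivAt γ v t) (hw : HasDerivAt w w' t) :
    HasDerivAt (fun t => L (γ t) (w t)) (L' v (w t) + L (γ t) w') t := by
  have h1 : HasDerivAt (fun t => L (γ t)) (L' v) t := hL.comp_hasDerivAt t hγ
  exact h1.clm_apply hw

section
variable (u : (EuclideanSpace ℝ (Fin 2)) → ℂ) (U : Set (EuclideanSpace ℝ (Fin 2))) (hU : IsOpen U) (hu : ContDiffOn ℝ 2 u U)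

lemma cd_fderiv (hU : IsOpen U) (hu : ContDiffOn ℝ 2 u U) : ContDiffOn ℝ 1 (fderiv ℝ u) U :=
  hu.fderiv_of_isOpen hU (by norm_num)

lemma hd1 (hU : IsOpen U) (hu : ContDiffOn ℝ 2 u U) (x : (EuclideanSpace ℝ (Fin 2))) (hx : x ∈ U) :
    HasFDerivAt u (fderiv ℝ u x) x :=
  ((hu.contDiffAt (hU.mem_nhds hx)).differentiableAt (by norm_num)).hasFDerivAt

lemma hd2 (hU : IsOpen U) (hu : ContDiffOn ℝ 2 u U) (x : (EuclideanSpace ℝ (Fin 2))) (hx : x ∈ U) :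
    HasFDerivAt (fderiv ℝ u) (fderiv ℝ (fderiv ℝ u) x) x :=
  (((cd_fderiv u U hU hu).contDiffAt (hU.mem_nhds hx)).differentiableAt (by norm_num)).hasFDerivAt

lemma cont2 (hU : IsOpen U) (hu : ContDiffOn ℝ 2 u U) :
    ContinuousOn (fderiv ℝ (fderiv ℝ u)) U :=
  ((cd_fderiv u U hU hu).fderiv_of_isOpen hU (m := 0) (by norm_num)).continuousOn

lemma lap_eq (hU : IsOpen U) (hu : ContDiffOn ℝ 2 u U) (x : (EuclideanSpace ℝ (Fin 2))) (hx : x ∈ U) (t : ℝ) :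
    lap u x = fderiv ℝ (fderiv ℝ u) x (er t) (er t) + fderiv ℝ (fderiv ℝ u) x (et t) (et t) := by
  have h : ∀ e : (EuclideanSpace ℝ (Fin 2)), fderiv ℝ (fun y => fderiv ℝ u y e) x e = fderiv ℝ (fderiv ℝ u) x e e := by
    intro e
    rw [((hd2 u U hU hu x hx).clm_apply (hasFDerivAt_const e x)).fderiv]
    simp
  have hcs : (Real.cos t : ℂ) ^ 2 = 1 - (Real.sin t : ℂ) ^ 2 := by
    have := Real.cos_sq' t
    exact_mod_cast this
  simp only [lap, h, Fin.sum_univ_two, er, et, map_add, map_smul, add_apply,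
    smul_apply, smul_add, Complex.real_smul, Complex.ofReal_neg]
  generalize (fderiv ℝ (fderiv ℝ u) x) = B
  linear_combination -(B (EuclideanSpace.single 0 1) (EuclideanSpace.single 0 1) +
    B (EuclideanSpace.single 1 1) (EuclideanSpace.single 1 1)) * hcs

variable (x₀ : (EuclideanSpace ℝ (Fin 2))) (n : ℤ) (S : Set ℝ)

lemma exp_cont : Continuous fun t : ℝ => Complex.exp (-Complex.I * n * t) := by fun_prop

lemma comp_cont {E : Type*} [TopologicalSpace E] (w : (EuclideanSpace ℝ (Fin 2)) → E) (hw : ContinuousOn w U)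
    (hSU : ∀ r ∈ S, ∀ t, x₀ + r • er t ∈ U) :
    ContinuousOn (fun p : ℝ × ℝ => w (x₀ + p.1 • er p.2)) (S ×ˢ Set.univ) := by
  refine hw.comp (f := fun p : ℝ × ℝ => x₀ + p.1 • er p.2) ?_ (fun p hp => hSU _ hp.1 _)
  have := continuous_er
  fun_prop

lemma comp_cont_r {E : Type*} [TopologicalSpace E] (w : (EuclideanSpace ℝ (Fin 2)) → E) (hw : ContinuousOn w U)
    (hSU : ∀ r ∈ S, ∀ t, x₀ + r • er t ∈ U) (r : ℝ) (hr : r ∈ S) :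
    Continuous (fun t : ℝ => w (x₀ + r • er t)) := by
  rw [← continuousOn_univ]
  exact (comp_cont U x₀ S w hw hSU).comp (f := fun t => (r, t)) (by fun_prop)
    (fun t _ => ⟨hr, trivial⟩)

lemma line_deriv (r t : ℝ) : HasDerivAt (fun r : ℝ => x₀ + r • er t) (er t) r := by
  simpa using ((hasDerivAt_id r).smul_const (er t)).const_add x₀

lemma circ_deriv (r t : ℝ) : HasDerivAt (fun t : ℝ => x₀ + r • er t) (r • et t) t :=
  ((hasDerivAt_er t).const_smul r).const_add x₀

lemma coef_deriv (hU : IsOpen U) (hu : ContDiffOn ℝ 2 u U) (hS : IsOpen S)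
    (hSU : ∀ r ∈ S, ∀ t, x₀ + r • er t ∈ U) (r : ℝ) (hr : r ∈ S) :
    HasDerivAt (coef u x₀ n) (coefD u x₀ n r) r := by
  refine hasDerivAt_param (fun r t => u (x₀ + r • er t) * Complex.exp (-Complex.I * n * t))
    (fun r t => fderiv ℝ u (x₀ + r • er t) (er t) * Complex.exp (-Complex.I * n * t))
    S hS ?_ ?_ ?_ r hr
  · intro r hr
    exact (comp_cont_r U x₀ S u hu.continuousOn hSU r hr).mul (exp_cont n)
  · intro r hr t
    exact ((hd1 u U hU hu _ (hSU r hr t)).comp_hasDerivAt r (line_deriv x₀ r t)).mul_const _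
  · exact ((comp_cont U x₀ S _ (cd_fderiv u U hU hu).continuousOn hSU).clm_apply
      (continuous_er.comp continuous_snd).continuousOn).mul
      ((exp_cont n).comp continuous_snd).continuousOn

lemma coefD_deriv' (hU : IsOpen U) (hu : ContDiffOn ℝ 2 u U) (hS : IsOpen S)
    (hSU : ∀ r ∈ S, ∀ t, x₀ + r • er t ∈ U) (r : ℝ) (hr : r ∈ S) :
    HasDerivAt (coefD u x₀ n) (∫ t in (0:ℝ)..(2 * Real.pi),
      fderiv ℝ (fderiv ℝ u) (x₀ + r • er t) (er t) (er t) * Complex.exp (-Complex.I * n * t)) r := by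
  refine hasDerivAt_param
    (fun r t => fderiv ℝ u (x₀ + r • er t) (er t) * Complex.exp (-Complex.I * n * t))
    (fun r t => fderiv ℝ (fderiv ℝ u) (x₀ + r • er t) (er t) (er t)
      * Complex.exp (-Complex.I * n * t))
    S hS ?_ ?_ ?_ r hr
  · intro r hr
    exact ((comp_cont_r U x₀ S _ (cd_fderiv u U hU hu).continuousOn hSU r hr).clm_apply
      continuous_er).mul (exp_cont n)
  · intro r hr t
    have := curve2 (fderiv ℝ u) _ (fun r => x₀ + r • er t) (fun _ => er t) _ _ r
      (hd2 u U hU hu _ (hSU r hr t)) (line_deriv x₀ r t) (hasDerivAt_const r (er t))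
    rw [map_zero, add_zero] at this
    exact this.mul_const _
  · exact (((comp_cont U x₀ S _ (cont2 u U hU hu) hSU).clm_apply
      (continuous_er.comp continuous_snd).continuousOn).clm_apply
      (continuous_er.comp continuous_snd).continuousOn).mul
      ((exp_cont n).comp continuous_snd).continuousOn

lemma exp_int : Complex.exp (-Complex.I * n * ((2 * Real.pi : ℝ) : ℂ)) = 1 := by
  rw [Complex.exp_eq_one_iff]
  exact ⟨-n, by push_cast; ring⟩

/-- integration by parts in the angle -/
lemma angular_ibp (hU : IsOpen U) (hu : ContDiffOn ℝ 2 u U)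
    (hSU : ∀ r ∈ S, ∀ t, x₀ + r • er t ∈ U) (r : ℝ) (hr : r ∈ S) :
    ∫ t in (0:ℝ)..(2 * Real.pi),
      ((r : ℂ) ^ 2 * fderiv ℝ (fderiv ℝ u) (x₀ + r • er t) (et t) (et t)
        - r * fderiv ℝ u (x₀ + r • er t) (er t) + (n : ℂ) ^ 2 * u (x₀ + r • er t))
        * Complex.exp (-Complex.I * n * t) = 0 := by
  have hE : ∀ t : ℝ, HasDerivAt (fun t : ℝ => Complex.exp (-Complex.I * n * t))
      (Complex.exp (-Complex.I * n * t) * (-Complex.I * n)) t := by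
    intro t
    have := ((hasDerivAt_id t).ofReal_comp.const_mul (-Complex.I * n)).cexp
    simpa using this
  have hH : ∀ t : ℝ, HasDerivAt (fun t : ℝ =>
      (fderiv ℝ u (x₀ + r • er t) (r • et t) + Complex.I * n * u (x₀ + r • er t))
        * Complex.exp (-Complex.I * n * t))
      (((r : ℂ) ^ 2 * fderiv ℝ (fderiv ℝ u) (x₀ + r • er t) (et t) (et t)
        - r * fderiv ℝ u (x₀ + r • er t) (er t) + (n : ℂ) ^ 2 * u (x₀ + r • er t))
        * Complex.exp (-Complex.I * n * t)) t := by
    intro t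
    have h1 := (hd1 u U hU hu _ (hSU r hr t)).comp_hasDerivAt t (circ_deriv x₀ r t)
    have h2 := curve2 (fderiv ℝ u) _ (fun t => x₀ + r • er t) (fun t => r • et t) _ _ t
      (hd2 u U hU hu _ (hSU r hr t)) (circ_deriv x₀ r t) ((hasDerivAt_et t).const_smul r)
    have h3 := (h2.add (h1.const_mul (Complex.I * n))).mul (hE t)
    convert! h3 using 1
    simp only [map_smul, smul_apply, Complex.real_smul, map_neg, smul_neg,
      Function.comp_apply, Pi.add_apply]
    linear_combination ((n:ℂ) ^ 2 * u (x₀ + r • er t) * Complex.exp (-Complex.I * n * t)) *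
      Complex.I_sq
  rw [intervalIntegral.integral_eq_sub_of_hasDerivAt (fun t _ => hH t)]
  · have h1 : er (2 * Real.pi) = er 0 := by simpa using er_periodic 0
    have h2 : et (2 * Real.pi) = et 0 := by simpa using et_periodic 0
    simp only [h1, h2, exp_int]
    simp
  · apply Continuous.intervalIntegrable
    have c0 := comp_cont_r U x₀ S u hu.continuousOn hSU r hr
    have c1 := (comp_cont_r U x₀ S _ (cd_fderiv u U hU hu).continuousOn hSU r hr).clm_apply
      continuous_er
    have c2 := ((comp_cont_r U x₀ S _ (cont2 u U hU hu) hSU r hr).clm_apply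
      continuous_et).clm_apply continuous_et
    exact (((continuous_const.mul c2).sub (continuous_const.mul c1)).add
      (continuous_const.mul c0)).mul (exp_cont n)

lemma coefD_deriv (κ : ℝ) (hU : IsOpen U) (hu : ContDiffOn ℝ 2 u U)
    (hH : ∀ x ∈ U, lap u x + (κ : ℂ) ^ 2 * u x = 0) (hS : IsOpen S)
    (hSU : ∀ r ∈ S, ∀ t, x₀ + r • er t ∈ U) (r : ℝ) (hr : r ∈ S) (hr0 : 0 < r) :
    HasDerivAt (coefD u x₀ n)
      (-(1 / r) * coefD u x₀ n r + ((n : ℂ) ^ 2 / r ^ 2 - κ ^ 2) * coef u x₀ n r) r := by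
  convert! coefD_deriv' u U x₀ n S hU hu hS hSU r hr using 1
  have hi := angular_ibp u U x₀ n S hU hu hSU r hr
  have c0 := (comp_cont_r U x₀ S u hu.continuousOn hSU r hr).mul (exp_cont n)
  have c1 := ((comp_cont_r U x₀ S _ (cd_fderiv u U hU hu).continuousOn hSU r hr).clm_apply
      continuous_er).mul (exp_cont n)
  have c2 := (((comp_cont_r U x₀ S _ (cont2 u U hU hu) hSU r hr).clm_apply
      continuous_er).clm_apply continuous_er).mul (exp_cont n)
  have hrc : (r : ℂ) ≠ 0 := by exact_mod_cast hr0.ne'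
  have key : ∀ t : ℝ, ((r : ℂ) ^ 2 * fderiv ℝ (fderiv ℝ u) (x₀ + r • er t) (et t) (et t)
        - r * fderiv ℝ u (x₀ + r • er t) (er t) + (n : ℂ) ^ 2 * u (x₀ + r • er t))
        * Complex.exp (-Complex.I * n * t)
      = ((n : ℂ) ^ 2 - r ^ 2 * κ ^ 2) * (u (x₀ + r • er t) * Complex.exp (-Complex.I * n * t))
        - r * (fderiv ℝ u (x₀ + r • er t) (er t) * Complex.exp (-Complex.I * n * t))
        - (r : ℂ) ^ 2 * (fderiv ℝ (fderiv ℝ u) (x₀ + r • er t) (er t) (er t) *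
          Complex.exp (-Complex.I * n * t)) := by
    intro t
    have h := hH _ (hSU r hr t)
    rw [lap_eq u U hU hu _ (hSU r hr t) t] at h
    linear_combination ((r : ℂ) ^ 2 * Complex.exp (-Complex.I * n * t)) * h
  simp_rw [key] at hi
  rw [intervalIntegral.integral_sub, intervalIntegral.integral_sub,
    intervalIntegral.integral_const_mul, intervalIntegral.integral_const_mul,
    intervalIntegral.integral_const_mul] at hi
  · simp only [coef, coefD]
    generalize (∫ t in (0:ℝ)..(2 * Real.pi),
      u (x₀ + r • er t) * Complex.exp (-Complex.I * n * t)) = a at hi ⊢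
    generalize (∫ t in (0:ℝ)..(2 * Real.pi),
      fderiv ℝ u (x₀ + r • er t) (er t) * Complex.exp (-Complex.I * n * t)) = b at hi ⊢
    generalize (∫ t in (0:ℝ)..(2 * Real.pi),
      fderiv ℝ (fderiv ℝ u) (x₀ + r • er t) (er t) (er t) *
        Complex.exp (-Complex.I * n * t)) = d at hi ⊢
    field_simp
    linear_combination hi
  · exact (continuous_const.mul c0).intervalIntegrable _ _
  · exact (continuous_const.mul c1).intervalIntegrable _ _
  · exact ((continuous_const.mul c0).sub (continuous_const.mul c1)).intervalIntegrable _ _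
  · exact (continuous_const.mul c2).intervalIntegrable _ _

/-- vanishing of all coefficients -/
lemma zero_of_coef (r : ℝ) (hc : Continuous fun t : ℝ => u (x₀ + r • er t))
    (h : ∀ n : ℤ, coef u x₀ n r = 0) (t : ℝ) : u (x₀ + r • er t) = 0 := by
  have : Fact (0 < 2 * Real.pi) := ⟨Real.two_pi_pos⟩
  have hper : Function.Periodic (fun t : ℝ => u (x₀ + r • er t)) (2 * Real.pi) := by
    intro t; simp only [er_periodic t]
  let F : C(AddCircle (2 * Real.pi), ℂ) := ⟨hper.lift, by
    exact continuous_coinduced_dom.2 hc⟩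
  have hF : ∀ t : ℝ, F (t : AddCircle (2 * Real.pi)) = u (x₀ + r • er t) :=
    fun t => hper.lift_coe t
  have h0 : fourierCoeff F = 0 := by
    ext n
    rw [fourierCoeff_eq_intervalIntegral F n 0]
    simp only [hF, zero_add, Pi.zero_apply]
    have := h n
    rw [coef] at this
    rw [smul_eq_zero]
    right
    rw [← this]
    congr 1
    ext t
    rw [smul_eq_mul, mul_comm, fourier_coe_apply]
    congr 2
    push_cast
    field_simp
  have hs := has_pointwise_sum_fourier_series_of_summable (f := F)
    (by rw [h0]; exact summable_zero) (t : AddCircle (2 * Real.pi))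
  rw [h0, hF] at hs
  simp only [Pi.zero_apply, zero_smul] at hs
  exact hs.unique hasSum_zero

/-- the Liouville-transformed pair -/
def fF (r : ℝ) : ℂ := (Real.sqrt r : ℂ) * coef u x₀ n r
/-- derivative of fF -/
def gF (r : ℝ) : ℂ := (Real.sqrt r : ℂ) * coefD u x₀ n r + coef u x₀ n r / (2 * Real.sqrt r)

lemma fg_ode (κ : ℝ) (hU : IsOpen U) (hu : ContDiffOn ℝ 2 u U)
    (hH : ∀ x ∈ U, lap u x + (κ : ℂ) ^ 2 * u x = 0) (hS : IsOpen S)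
    (hSU : ∀ r ∈ S, ∀ t, x₀ + r • er t ∈ U) (r : ℝ) (hr : r ∈ S) (hr0 : 0 < r) :
    HasDerivAt (fF u x₀ n) (gF u x₀ n r) r ∧
    HasDerivAt (gF u x₀ n)
      (((((n:ℝ) ^ 2 - 1 / 4) / r ^ 2 - κ ^ 2 : ℝ) : ℂ) * fF u x₀ n r) r := by
  have ha := coef_deriv u U x₀ n S hU hu hS hSU r hr
  have hb := coefD_deriv u U x₀ n S κ hU hu hH hS hSU r hr hr0
  have hs := (Real.hasDerivAt_sqrt hr0.ne').ofReal_comp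
  have hsp : 0 < Real.sqrt r := Real.sqrt_pos.2 hr0
  have hsc : (Real.sqrt r : ℂ) ≠ 0 := by exact_mod_cast hsp.ne'
  have hsq : (r : ℂ) = (Real.sqrt r : ℂ) ^ 2 := by
    exact_mod_cast (Real.sq_sqrt hr0.le).symm
  constructor
  · convert! hs.mul ha using 1
    simp only [gF]
    push_cast
    field_simp
    ring
  · have h2 : (2 * (Real.sqrt r : ℂ)) ≠ 0 := by simp [hsc]
    convert! (hs.mul hb).add (ha.div (hs.const_mul 2) h2) using 1
    simp only [fF]
    push_cast
    rw [hsq]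
    field_simp
    ring

end
end WU

namespace WU
open Filter Topology MeasureTheory


lemma norm_coef_le (F : ℝ → ℂ) (n : ℤ) (M : ℝ) (h : ∀ t, ‖F t‖ ≤ M) :
    ‖∫ t in (0:ℝ)..(2 * Real.pi), F t * Complex.exp (-Complex.I * n * t)‖
      ≤ M * (2 * Real.pi) := by
  have := intervalIntegral.norm_integral_le_of_norm_le_const (a := 0) (b := 2 * Real.pi) (C := M)
    (f := fun t : ℝ => F t * Complex.exp (-Complex.I * n * t)) (by
      intro t _
      have e : -Complex.I * n * t = ((-(n * t) : ℝ) : ℂ) * Complex.I := by push_cast; ring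
      rw [norm_mul, e, Complex.norm_exp_ofReal_mul_I, mul_one]
      exact h t)
  rwa [sub_zero, abs_of_pos Real.two_pi_pos] at this

lemma local_uc (κ : ℝ) (hκ : 0 < κ) (w : (EuclideanSpace ℝ (Fin 2)) → ℂ) (U : Set (EuclideanSpace ℝ (Fin 2))) (hU : IsOpen U)
    (hw : ContDiffOn ℝ 2 w U) (hH : ∀ x ∈ U, lap w x + (κ : ℂ) ^ 2 * w x = 0)
    (x₀ : (EuclideanSpace ℝ (Fin 2))) (R ρ : ℝ) (hρ : 0 < ρ) (hB : Metric.ball x₀ R ⊆ U)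
    (h0 : ∀ x ∈ Metric.ball x₀ ρ, w x = 0) (x : (EuclideanSpace ℝ (Fin 2))) (hx : x ∈ Metric.ball x₀ R) : w x = 0 := by
  by_cases hxρ : x ∈ Metric.ball x₀ ρ
  · exact h0 x hxρ
  rw [mem_ball_iff_norm] at hx hxρ
  obtain ⟨t, ht⟩ := exists_er (x - x₀)
  set r := ‖x - x₀‖ with hrdef
  have hxe : x = x₀ + r • er t := by rw [← ht]; abel
  have hSU : ∀ s ∈ Set.Ioo 0 R, ∀ t, x₀ + s • er t ∈ U := by
    intro s hs t
    apply hB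
    rw [mem_ball_iff_norm, add_sub_cancel_left, norm_smul, norm_er, mul_one, Real.norm_eq_abs,
      abs_of_pos hs.1]
    exact hs.2
  have hr : r ∈ Set.Ioo 0 R := ⟨by linarith, hx⟩
  have ha : ρ / 2 ∈ Set.Ioo 0 R := ⟨by linarith, by linarith⟩
  have hmem : ∀ t, x₀ + (ρ / 2) • er t ∈ Metric.ball x₀ ρ := by
    intro t
    rw [mem_ball_iff_norm, add_sub_cancel_left, norm_smul, norm_er, mul_one, Real.norm_eq_abs,
      abs_of_pos ha.1]
    linarith
  rw [hxe]
  refine zero_of_coef w x₀ r (comp_cont_r U x₀ _ w hw.continuousOn hSU r hr) ?_ t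
  intro n
  have c0 : coef w x₀ n (ρ / 2) = 0 := by
    simp only [coef, h0 _ (hmem _), zero_mul, intervalIntegral.integral_zero]
  have c1 : coefD w x₀ n (ρ / 2) = 0 := by
    have : ∀ t, fderiv ℝ w (x₀ + (ρ / 2) • er t) = 0 := by
      intro t
      have : w =ᶠ[𝓝 (x₀ + (ρ / 2) • er t)] fun _ => 0 := by
        filter_upwards [Metric.isOpen_ball.mem_nhds (hmem t)] with y hy using h0 y hy
      rw [this.fderiv_eq, fderiv_fun_const]; rfl
    simp only [coefD, this, zero_apply, zero_mul, intervalIntegral.integral_zero]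
  have := ode_zero_right κ hκ ((n:ℝ) ^ 2 - 1 / 4) (Set.Ioo 0 R) (convex_Ioo _ _) isOpen_Ioo
    (fun r hr => hr.1) (fF w x₀ n) (gF w x₀ n)
    (fun r hr => (fg_ode w U x₀ n _ κ hU hw hH isOpen_Ioo hSU r hr hr.1).1)
    (fun r hr => (fg_ode w U x₀ n _ κ hU hw hH isOpen_Ioo hSU r hr hr.1).2)
    (ρ / 2) r ha hr (by linarith) (by simp [fF, c0]) (by simp [gF, c0, c1])
  rw [fF, mul_eq_zero] at this
  rcases this with h | h
  · exact absurd h (by exact_mod_cast (Real.sqrt_pos.2 hr.1).ne')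
  · exact h

lemma tail_zero (κ : ℝ) (hκ : 0 < κ) (w : (EuclideanSpace ℝ (Fin 2)) → ℂ) (U : Set (EuclideanSpace ℝ (Fin 2))) (hU : IsOpen U)
    (hw : ContDiffOn ℝ 2 w U) (hH : ∀ x ∈ U, lap w x + (κ : ℂ) ^ 2 * w x = 0)
    (A : ℝ) (hA : 0 ≤ A) (hSU : ∀ r ∈ Set.Ioi A, ∀ t, (0:(EuclideanSpace ℝ (Fin 2))) + r • er t ∈ U)
    (h0 : ∀ n, Tendsto (fF w 0 n) atTop (𝓝 0))
    (h1 : ∀ n, Tendsto (fun r => gF w 0 n r - Complex.I * κ * fF w 0 n r) atTop (𝓝 0))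
    (x : (EuclideanSpace ℝ (Fin 2))) (hx : A < ‖x‖) : w x = 0 := by
  obtain ⟨t, ht⟩ := exists_er x
  have hxe : x = 0 + ‖x‖ • er t := by rw [← ht]; abel
  rw [hxe]
  refine zero_of_coef w 0 ‖x‖ (comp_cont_r U 0 _ w hw.continuousOn hSU ‖x‖ hx) ?_ t
  intro n
  have hg : Tendsto (gF w 0 n) atTop (𝓝 0) := by
    have := (h1 n).add ((h0 n).const_mul (Complex.I * κ))
    simpa using this
  have := ode_zero_infty κ hκ ((n:ℝ) ^ 2 - 1 / 4) A hA (fF w 0 n) (gF w 0 n)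
    (fun r hr => (fg_ode w U 0 n _ κ hU hw hH isOpen_Ioi hSU r hr (lt_of_le_of_lt hA hr)).1)
    (fun r hr => (fg_ode w U 0 n _ κ hU hw hH isOpen_Ioi hSU r hr (lt_of_le_of_lt hA hr)).2)
    (h0 n) hg ‖x‖ hx
  rw [fF, mul_eq_zero] at this
  rcases this with h | h
  · exact absurd h (by exact_mod_cast (Real.sqrt_pos.2 (lt_of_le_of_lt hA hx)).ne')
  · exact h

lemma fF_bound (w : (EuclideanSpace ℝ (Fin 2)) → ℂ) (n : ℤ) (r M : ℝ) (hr : 0 < r)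
    (h : ∀ t, Real.sqrt r * ‖w (r • er t)‖ ≤ M) : ‖fF w 0 n r‖ ≤ M * (2 * Real.pi) := by
  have hs := Real.sqrt_pos.2 hr
  have := norm_coef_le (fun t => w (0 + r • er t)) n (M / Real.sqrt r) (fun t => by
    rw [le_div_iff₀ hs, zero_add, mul_comm]; exact h t)
  rw [fF, norm_mul, Complex.norm_real, Real.norm_eq_abs, abs_of_pos hs]
  calc Real.sqrt r * ‖coef w 0 n r‖ ≤ Real.sqrt r * (M / Real.sqrt r * (2 * Real.pi)) := by
        gcongr; exact this
    _ = _ := by field_simp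

lemma rad_tendsto (κ : ℝ) (w : (EuclideanSpace ℝ (Fin 2)) → ℂ) (U : Set (EuclideanSpace ℝ (Fin 2))) (hU : IsOpen U)
    (hw : ContDiffOn ℝ 2 w U) (hrad : SommerfeldRadiation κ w)
    (A : ℝ) (hA : 0 ≤ A) (hSU : ∀ r ∈ Set.Ioi A, ∀ t, (0:(EuclideanSpace ℝ (Fin 2))) + r • er t ∈ U)
    (n : ℤ) (M R : ℝ) (hM : ∀ r, R ≤ r → ∀ t, Real.sqrt r * ‖w (r • er t)‖ ≤ M) :
    Tendsto (fun r => gF w 0 n r - Complex.I * κ * fF w 0 n r) atTop (𝓝 0) := by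
  have T1 : Tendsto (fun r : ℝ => (Real.sqrt r : ℂ) *
      (coefD w 0 n r - Complex.I * κ * coef w 0 n r)) atTop (𝓝 0) := by
    rw [Metric.tendsto_atTop]
    intro ε hε
    obtain ⟨R₀, hR₀, h⟩ := hrad (ε / (4 * Real.pi)) (by positivity)
    refine ⟨max R₀ (A + 1), fun r hr => ?_⟩
    have hr1 : R₀ ≤ r := (le_max_left _ _).trans hr
    have hr2 : A < r := by linarith [(le_max_right R₀ (A + 1)).trans hr]
    have hr0 : 0 < r := by linarith
    have hs := Real.sqrt_pos.2 hr0
    have c0 := (comp_cont_r U 0 _ w hw.continuousOn hSU r hr2).mul (exp_cont n)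
    have c1 := ((comp_cont_r U 0 _ _ (cd_fderiv w U hU hw).continuousOn hSU r hr2).clm_apply
      continuous_er).mul (exp_cont n)
    have e : coefD w 0 n r - Complex.I * κ * coef w 0 n r =
        ∫ t in (0:ℝ)..(2 * Real.pi), (fderiv ℝ w (0 + r • er t) (er t)
          - Complex.I * κ * w (0 + r • er t)) * Complex.exp (-Complex.I * n * t) := by
      rw [coef, coefD, ← intervalIntegral.integral_const_mul, ← intervalIntegral.integral_sub]
      · congr 1; ext t; ring
      · exact c1.intervalIntegrable _ _
      · exact (continuous_const.mul c0).intervalIntegrable _ _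
    have hb := norm_coef_le (fun t => fderiv ℝ w (0 + r • er t) (er t)
          - Complex.I * κ * w (0 + r • er t)) n (ε / (4 * Real.pi) / Real.sqrt r) (fun t => by
        have hn : ‖r • er t‖ = r := by
          rw [norm_smul, norm_er, mul_one, Real.norm_eq_abs, abs_of_pos hr0]
        have := h (r • er t) (by rw [hn]; exact hr1)
        rw [hn, smul_smul, inv_mul_cancel₀ hr0.ne', one_smul] at this
        rw [le_div_iff₀ hs, zero_add, mul_comm]
        exact this)
    rw [dist_zero_right, e, norm_mul, Complex.norm_real, Real.norm_eq_abs, abs_of_pos hs]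
    refine (mul_le_mul_of_nonneg_left hb hs.le).trans_lt ?_
    have : Real.sqrt r * (ε / (4 * Real.pi) / Real.sqrt r * (2 * Real.pi)) = ε / 2 := by
      field_simp
      norm_num
    rw [this]
    linarith
  have T2 : Tendsto (fun r : ℝ => fF w 0 n r * ((2 * r : ℝ) : ℂ)⁻¹) atTop (𝓝 0) := by
    have hz : Tendsto (fun r : ℝ => M * (2 * Real.pi) * (2 * r)⁻¹) atTop (𝓝 0) := by
      have : Tendsto (fun r : ℝ => (2 * r)⁻¹) atTop (𝓝 0) :=
        tendsto_inv_atTop_zero.comp (tendsto_id.const_mul_atTop two_pos)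
      simpa using this.const_mul (M * (2 * Real.pi))
    refine squeeze_zero_norm' ?_ hz
    filter_upwards [eventually_ge_atTop R, eventually_gt_atTop 0] with r h1 h2
    rw [norm_mul, norm_inv, Complex.norm_real, Real.norm_eq_abs, abs_of_pos (by positivity : 0 < 2 * r)]
    have := fF_bound w n r M h2 (hM r h1)
    gcongr
  have T := T1.add T2
  rw [add_zero] at T
  refine T.congr' ?_
  filter_upwards [eventually_gt_atTop 0] with r hr
  have hsc : (Real.sqrt r : ℂ) ≠ 0 := by exact_mod_cast (Real.sqrt_pos.2 hr).ne'
  have hsq : (r : ℂ) = (Real.sqrt r : ℂ) ^ 2 := by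
    exact_mod_cast (Real.sq_sqrt hr.le).symm
  simp only [fF, gF]
  push_cast
  have : ((2:ℂ) * r)⁻¹ = (2 * (Real.sqrt r : ℂ) ^ 2)⁻¹ := by rw [← hsq]
  rw [this]
  field_simp
  ring

lemma fF_tendsto (w : (EuclideanSpace ℝ (Fin 2)) → ℂ) (n : ℤ)
    (h : ∀ ε > 0, ∃ R : ℝ, ∀ r, R ≤ r → ∀ t, Real.sqrt r * ‖w (r • er t)‖ ≤ ε) :
    Tendsto (fF w 0 n) atTop (𝓝 0) := by
  rw [Metric.tendsto_atTop]
  intro ε hε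
  obtain ⟨R, hR⟩ := h (ε / (4 * Real.pi)) (by positivity)
  refine ⟨max R 1, fun r hr => ?_⟩
  have hr0 : 0 < r := by linarith [(le_max_right R 1).trans hr]
  have := fF_bound w n r _ hr0 (hR r ((le_max_left _ _).trans hr))
  rw [dist_zero_right]
  refine this.trans_lt ?_
  have : ε / (4 * Real.pi) * (2 * Real.pi) = ε / 2 := by field_simp; norm_num
  rw [this]; linarith

/-- entire radiating solutions vanish -/
lemma entire_zero (κ : ℝ) (hκ : 0 < κ) (w : (EuclideanSpace ℝ (Fin 2)) → ℂ)
    (hw : ContDiffOn ℝ 2 w Set.univ) (hH : ∀ x ∈ Set.univ, lap w x + (κ : ℂ) ^ 2 * w x = 0)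
    (hrad : SommerfeldRadiation κ w)
    (M R : ℝ) (hM : ∀ r, R ≤ r → ∀ t, Real.sqrt r * ‖w (r • er t)‖ ≤ M)
    (x : (EuclideanSpace ℝ (Fin 2))) (hx : 0 < ‖x‖) : w x = 0 := by
  have hSU : ∀ r ∈ Set.Ioi (0:ℝ), ∀ t, (0:(EuclideanSpace ℝ (Fin 2))) + r • er t ∈ (Set.univ : Set (EuclideanSpace ℝ (Fin 2))) :=
    fun _ _ _ => trivial
  have H1 : ∀ n, Tendsto (fun r => gF w 0 n r - Complex.I * κ * fF w 0 n r) atTop (𝓝 0) :=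
    fun n => rad_tendsto κ w _ isOpen_univ hw hrad 0 le_rfl hSU n M R hM
  refine tail_zero κ hκ w _ isOpen_univ hw hH 0 le_rfl hSU ?_ H1 x hx
  intro n
  obtain ⟨K0, hK0⟩ := (isCompact_closedBall (0:(EuclideanSpace ℝ (Fin 2))) 1).exists_bound_of_continuousOn
    (hw.continuousOn.mono (Set.subset_univ _))
  obtain ⟨K1, hK1⟩ := (isCompact_closedBall (0:(EuclideanSpace ℝ (Fin 2))) 1).exists_bound_of_continuousOn
    ((cd_fderiv w _ isOpen_univ hw).continuousOn.mono (Set.subset_univ _))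
  have hmem : ∀ r : ℝ, 0 < r → r ≤ 1 → ∀ t, (0:(EuclideanSpace ℝ (Fin 2))) + r • er t ∈ Metric.closedBall (0:(EuclideanSpace ℝ (Fin 2))) 1 := by
    intro r h0 h1 t
    rw [mem_closedBall_zero_iff, zero_add, norm_smul, norm_er, mul_one, Real.norm_eq_abs,
      abs_of_pos h0]
    exact h1
  have hW1 : ∀ r : ℝ, 0 < r → inner ℝ (Complex.I * fF w 0 n r) (gF w 0 n r) =
      r * inner ℝ (Complex.I * coef w 0 n r) (coefD w 0 n r) := by
    intro r hr
    have hs : Real.sqrt r ≠ 0 := (Real.sqrt_pos.2 hr).ne'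
    have hsq : Real.sqrt r ^ 2 = r := Real.sq_sqrt hr.le
    have e1 : Complex.I * fF w 0 n r = Real.sqrt r • (Complex.I * coef w 0 n r) := by
      rw [Complex.real_smul, fF]; ring
    have e2 : gF w 0 n r = Real.sqrt r • coefD w 0 n r + (2 * Real.sqrt r)⁻¹ • coef w 0 n r := by
      rw [Complex.real_smul, Complex.real_smul, gF]; push_cast; ring
    have e3 : inner ℝ (Complex.I * coef w 0 n r) (coef w 0 n r) = 0 := by
      simp only [Complex.inner, map_mul, Complex.conj_I, Complex.mul_re, Complex.mul_im,
        Complex.neg_re, Complex.neg_im, Complex.I_re, Complex.I_im, Complex.conj_re,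
        Complex.conj_im]
      ring
    rw [e1, e2, inner_add_right, real_inner_smul_left, real_inner_smul_left, real_inner_smul_right,
      real_inner_smul_right, e3]
    linear_combination (inner ℝ (Complex.I * coef w 0 n r) (coefD w 0 n r)) * hsq
  have hode := fun (r : ℝ) (hr : r ∈ Set.Ioi (0:ℝ)) =>
    fg_ode w Set.univ 0 n (Set.Ioi 0) κ isOpen_univ hw hH isOpen_Ioi hSU r hr hr
  have hWc := wronskian_const κ ((n:ℝ) ^ 2 - 1 / 4) (fF w 0 n) (gF w 0 n)
    (fun r hr => (hode r hr).1) (fun r hr => (hode r hr).2)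
  have hW0 : inner ℝ (Complex.I * fF w 0 n 1) (gF w 0 n 1) = 0 := by
    rw [← abs_nonpos_iff]
    set K := (K0 * (2 * Real.pi)) * (K1 * (2 * Real.pi)) with hK
    have hlim : Tendsto (fun r : ℝ => r * K) (𝓝[>] 0) (𝓝 0) := by
      have : Tendsto (fun r : ℝ => r * K) (𝓝 0) (𝓝 (0 * K)) :=
        (continuous_id.mul continuous_const).tendsto 0
      rw [zero_mul] at this
      exact this.mono_left nhdsWithin_le_nhds
    refine ge_of_tendsto hlim ?_
    filter_upwards [Ioo_mem_nhdsGT (zero_lt_one' ℝ)] with r hr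
    rw [hWc 1 r one_pos hr.1, hW1 r hr.1, abs_mul, abs_of_pos hr.1]
    refine mul_le_mul_of_nonneg_left ?_ hr.1.le
    refine (abs_real_inner_le_norm _ _).trans ?_
    rw [norm_mul, Complex.norm_I, one_mul]
    have b0 := norm_coef_le (fun t => w (0 + r • er t)) n K0
      (fun t => hK0 _ (hmem r hr.1 hr.2.le t))
    have b1 := norm_coef_le (fun t => fderiv ℝ w (0 + r • er t) (er t)) n K1
      (fun t => by
        refine ((fderiv ℝ w (0 + r • er t)).le_opNorm (er t)).trans ?_
        rw [norm_er, mul_one]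
        exact hK1 _ (hmem r hr.1 hr.2.le t))
    exact mul_le_mul b0 b1 (norm_nonneg _) ((norm_nonneg _).trans b0)
  have hle : ∀ r : ℝ, 0 < r → ‖fF w 0 n r‖ ≤
      κ⁻¹ * ‖gF w 0 n r - Complex.I * κ * fF w 0 n r‖ := by
    intro r hr
    have hW := hWc r 1 hr one_pos
    rw [hW0] at hW
    have e : Complex.I * κ * fF w 0 n r = κ • (Complex.I * fF w 0 n r) := by
      rw [Complex.real_smul]; ring
    have h := norm_sub_sq_real (gF w 0 n r) (Complex.I * κ * fF w 0 n r)
    rw [e, real_inner_smul_right, real_inner_comm, hW, norm_smul, norm_mul, Complex.norm_I,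
      Real.norm_eq_abs, abs_of_pos hκ] at h
    rw [e, inv_mul_eq_div, le_div_iff₀ hκ]
    refine le_of_sq_le_sq ?_ (norm_nonneg _)
    rw [h]
    nlinarith [sq_nonneg ‖gF w 0 n r‖]
  have hz : Tendsto (fun r => κ⁻¹ * ‖gF w 0 n r - Complex.I * κ * fF w 0 n r‖) atTop (𝓝 0) := by
    simpa using (H1 n).norm.const_mul κ⁻¹
  refine squeeze_zero_norm' ?_ hz
  filter_upwards [eventually_gt_atTop 0] with r hr using hle r hr

lemma lap_congr (u v : (EuclideanSpace ℝ (Fin 2)) → ℂ) (x : (EuclideanSpace ℝ (Fin 2))) (h : u =ᶠ[𝓝 x] v) : lap u x = lap v x := by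
  simp only [lap]
  refine Finset.sum_congr rfl fun i _ => ?_
  have : (fun y => fderiv ℝ u y (EuclideanSpace.single i 1)) =ᶠ[𝓝 x]
      fun y => fderiv ℝ v y (EuclideanSpace.single i 1) := by
    filter_upwards [h.eventuallyEq_nhds] with y hy
    rw [hy.fderiv_eq]
  rw [this.fderiv_eq]

lemma lap_sub (u v : (EuclideanSpace ℝ (Fin 2)) → ℂ) (U : Set (EuclideanSpace ℝ (Fin 2))) (hU : IsOpen U) (hu : ContDiffOn ℝ 2 u U)
    (hv : ContDiffOn ℝ 2 v U) (x : (EuclideanSpace ℝ (Fin 2))) (hx : x ∈ U) :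
    lap (fun y => u y - v y) x = lap u x - lap v x := by
  have h : fderiv ℝ (fun y => u y - v y) =ᶠ[𝓝 x] fun y => fderiv ℝ u y - fderiv ℝ v y := by
    filter_upwards [hU.mem_nhds hx] with y hy
    exact ((hd1 u U hU hu y hy).sub (hd1 v U hU hv y hy)).fderiv
  have h2 : fderiv ℝ (fderiv ℝ (fun y => u y - v y)) x =
      fderiv ℝ (fderiv ℝ u) x - fderiv ℝ (fderiv ℝ v) x := by
    rw [h.fderiv_eq]
    exact ((hd2 u U hU hu x hx).sub (hd2 v U hU hv x hx)).fderiv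
  rw [lap_eq _ U hU (hu.sub hv) x hx 0, lap_eq u U hU hu x hx 0, lap_eq v U hU hv x hx 0]
  erw [h2]
  simp only [sub_apply]
  ring

lemma farField_bound (κ : ℝ) (v vInf : (EuclideanSpace ℝ (Fin 2)) → ℂ) (hff : IsFarFieldPattern κ v vInf)
    (hcont : ContinuousOn vInf (Metric.sphere (0 : (EuclideanSpace ℝ (Fin 2))) 1)) :
    ∃ M R : ℝ, ∀ r, R ≤ r → ∀ t, Real.sqrt r * ‖v (r • er t)‖ ≤ M := by
  obtain ⟨K, hK⟩ := (isCompact_sphere (0:(EuclideanSpace ℝ (Fin 2))) 1).exists_bound_of_continuousOn hcont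
  obtain ⟨R, hR⟩ := hff 1 one_pos
  refine ⟨1 + ‖farFieldConst κ‖ * K, R, fun r hr t => ?_⟩
  have h := hR r hr (er t) (norm_er t)
  have hk := hK (er t) (by simp [norm_er])
  have e : Real.sqrt r * ‖v (r • er t)‖ =
      ‖(Real.sqrt r : ℂ) * Complex.exp (-Complex.I * κ * r) * v (r • er t)‖ := by
    have e : -Complex.I * κ * r = ((-(κ * r) : ℝ) : ℂ) * Complex.I := by push_cast; ring
    rw [norm_mul, norm_mul, e, Complex.norm_exp_ofReal_mul_I, Complex.norm_real, Real.norm_eq_abs,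
      abs_of_nonneg (Real.sqrt_nonneg _), mul_one]
  rw [e]
  have h2 := norm_le_norm_sub_add
    ((Real.sqrt r : ℂ) * Complex.exp (-Complex.I * κ * r) * v (r • er t))
    (farFieldConst κ * vInf (er t))
  have h3 : ‖farFieldConst κ * vInf (er t)‖ ≤ ‖farFieldConst κ‖ * K := by
    rw [norm_mul]; gcongr
  linarith

lemma farField_diff (κ : ℝ) (v₁ v₂ vInf : (EuclideanSpace ℝ (Fin 2)) → ℂ) (hff₁ : IsFarFieldPattern κ v₁ vInf)
    (hff₂ : IsFarFieldPattern κ v₂ vInf) :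
    ∀ ε > 0, ∃ R : ℝ, ∀ r, R ≤ r → ∀ t,
      Real.sqrt r * ‖v₁ (r • er t) - v₂ (r • er t)‖ ≤ ε := by
  intro ε hε
  obtain ⟨R₁, h₁⟩ := hff₁ (ε / 2) (by positivity)
  obtain ⟨R₂, h₂⟩ := hff₂ (ε / 2) (by positivity)
  refine ⟨max R₁ R₂, fun r hr t => ?_⟩
  have a := h₁ r ((le_max_left _ _).trans hr) (er t) (norm_er t)
  have b := h₂ r ((le_max_right _ _).trans hr) (er t) (norm_er t)
  have e : Real.sqrt r * ‖v₁ (r • er t) - v₂ (r • er t)‖ =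
      ‖(Real.sqrt r : ℂ) * Complex.exp (-Complex.I * κ * r) *
        (v₁ (r • er t) - v₂ (r • er t))‖ := by
    have e : -Complex.I * κ * r = ((-(κ * r) : ℝ) : ℂ) * Complex.I := by push_cast; ring
    rw [norm_mul, norm_mul, e, Complex.norm_exp_ofReal_mul_I, Complex.norm_real, Real.norm_eq_abs,
      abs_of_nonneg (Real.sqrt_nonneg _), mul_one]
  rw [e]
  refine le_trans (le_of_eq ?_) ((norm_sub_le _ _).trans (add_le_add a b |>.trans_eq (by ring)))
  congr 1
  ring

lemma global_uc (κ : ℝ) (hκ : 0 < κ) (w : (EuclideanSpace ℝ (Fin 2)) → ℂ) (U : Set (EuclideanSpace ℝ (Fin 2))) (hU : IsOpen U)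
    (hc : IsPreconnected U)
    (hw : ContDiffOn ℝ 2 w U) (hH : ∀ x ∈ U, lap w x + (κ : ℂ) ^ 2 * w x = 0)
    (x₀ : (EuclideanSpace ℝ (Fin 2))) (hx₀ : x₀ ∈ U) (h0 : w =ᶠ[𝓝 x₀] fun _ => 0) : ∀ x ∈ U, w x = 0 := by
  have key : U ⊆ {x | w =ᶠ[𝓝 x] fun _ => 0} := by
    refine hc.subset_of_closure_inter_subset ?_ ⟨x₀, hx₀, h0⟩ ?_
    · rw [isOpen_iff_mem_nhds]
      intro x hx
      exact hx.eventuallyEq_nhds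
    · rintro y ⟨hy, hyU⟩
      obtain ⟨δ, hδ, hsub⟩ := Metric.isOpen_iff.1 hU y hyU
      obtain ⟨z, hz, hyz⟩ := Metric.mem_closure_iff.1 hy (δ / 2) (by linarith)
      obtain ⟨ρ, hρ, hzρ⟩ := Metric.eventually_nhds_iff_ball.1 hz
      have hB : Metric.ball z (δ / 2) ⊆ U := by
        refine Set.Subset.trans (Metric.ball_subset_ball' ?_) hsub
        rw [dist_comm] at hyz
        linarith
      have hyB : y ∈ Metric.ball z (δ / 2) := hyz
      filter_upwards [Metric.isOpen_ball.mem_nhds hyB] with x hx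
      exact local_uc κ hκ w U hU hw hH z (δ / 2) ρ hρ hB hzρ x hx
  intro x hx
  exact (key hx).eq_of_nhds

end WU

/-- Weak uniqueness (Theorem 3.1): two radiating exterior Helmholtz solutions with identical
non-trivial far-field patterns must have intersecting obstacle closures. -/
theorem weak_uniqueness (κ : ℝ) (hκ : 0 < κ)
    (D₁ D₂ : Set (EuclideanSpace ℝ (Fin 2)))
    (hD₁o : IsOpen D₁) (hD₂o : IsOpen D₂)
    (hD₁b : Bornology.IsBounded D₁) (hD₂b : Bornology.IsBounded D₂)
    (hconn : IsConnected ((closure D₁ ∪ closure D₂)ᶜ))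
    (v₁ v₂ : EuclideanSpace ℝ (Fin 2) → ℂ)
    (hv₁ : ContDiffOn ℝ 2 v₁ (closure D₁)ᶜ)
    (hv₂ : ContDiffOn ℝ 2 v₂ (closure D₂)ᶜ)
    (hHelm₁ : ∀ x ∈ (closure D₁)ᶜ, lap v₁ x + (κ : ℂ) ^ 2 * v₁ x = 0)
    (hHelm₂ : ∀ x ∈ (closure D₂)ᶜ, lap v₂ x + (κ : ℂ) ^ 2 * v₂ x = 0)
    (hrad₁ : SommerfeldRadiation κ v₁) (hrad₂ : SommerfeldRadiation κ v₂)
    (vInf : EuclideanSpace ℝ (Fin 2) → ℂ)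
    (hcont : ContinuousOn vInf (Metric.sphere (0 : EuclideanSpace ℝ (Fin 2)) 1))
    (hff₁ : IsFarFieldPattern κ v₁ vInf) (hff₂ : IsFarFieldPattern κ v₂ vInf)
    (hnontriv : ∃ θ ∈ Metric.sphere (0 : EuclideanSpace ℝ (Fin 2)) 1, vInf θ ≠ 0) :
    (closure D₁ ∩ closure D₂).Nonempty := by
  classical
  by_contra hne
  rw [Set.not_nonempty_iff_eq_empty] at hne
  have hO₁ : IsOpen (closure D₁)ᶜ := isClosed_closure.isOpen_compl
  have hO₂ : IsOpen (closure D₂)ᶜ := isClosed_closure.isOpen_compl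
  set Ω := (closure D₁ ∪ closure D₂)ᶜ with hΩ
  have hΩ₁ : Ω ⊆ (closure D₁)ᶜ := Set.compl_subset_compl.2 Set.subset_union_left
  have hΩ₂ : Ω ⊆ (closure D₂)ᶜ := Set.compl_subset_compl.2 Set.subset_union_right
  have hΩo : IsOpen Ω := (isClosed_closure.union isClosed_closure).isOpen_compl
  obtain ⟨A', hA'⟩ := (hD₁b.closure.union hD₂b.closure).subset_closedBall
    (0 : EuclideanSpace ℝ (Fin 2))
  set A := max A' 0 with hAdef
  have hA : 0 ≤ A := le_max_right _ _
  have hAΩ : ∀ x : EuclideanSpace ℝ (Fin 2), A < ‖x‖ → x ∈ Ω := by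
    intro x hx hmem
    have := hA' hmem
    rw [mem_closedBall_zero_iff] at this
    linarith [le_max_left A' 0]
  have hnr : ∀ r : ℝ, 0 ≤ r → ∀ t, ‖r • WU.er t‖ = r := by
    intro r hr t
    rw [norm_smul, WU.norm_er, mul_one, Real.norm_eq_abs, abs_of_nonneg hr]
  have hSU : ∀ r ∈ Set.Ioi A, ∀ t, (0 : EuclideanSpace ℝ (Fin 2)) + r • WU.er t ∈ Ω := by
    intro r hr t
    apply hAΩ
    rw [zero_add, hnr r (hA.trans (le_of_lt hr))]
    exact hr
  have hw : ContDiffOn ℝ 2 (fun y => v₁ y - v₂ y) Ω := (hv₁.mono hΩ₁).sub (hv₂.mono hΩ₂)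
  have hwH : ∀ x ∈ Ω, lap (fun y => v₁ y - v₂ y) x + (κ : ℂ) ^ 2 * (v₁ x - v₂ x) = 0 := by
    intro x hx
    rw [WU.lap_sub v₁ v₂ Ω hΩo (hv₁.mono hΩ₁) (hv₂.mono hΩ₂) x hx]
    linear_combination hHelm₁ x (hΩ₁ hx) - hHelm₂ x (hΩ₂ hx)
  have hwrad : SommerfeldRadiation κ (fun y => v₁ y - v₂ y) := by
    intro ε hε
    obtain ⟨R₁, hR₁, h₁⟩ := hrad₁ (ε / 2) (by positivity)
    obtain ⟨R₂, hR₂, h₂⟩ := hrad₂ (ε / 2) (by positivity)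
    refine ⟨max (max R₁ R₂) (A + 1), by positivity, fun x hx => ?_⟩
    have a := h₁ x (((le_max_left _ _).trans (le_max_left _ _)).trans hx)
    have b := h₂ x (((le_max_right _ _).trans (le_max_left _ _)).trans hx)
    have hxΩ : x ∈ Ω := hAΩ x (by linarith [(le_max_right _ _).trans hx])
    have hfd : fderiv ℝ (fun y => v₁ y - v₂ y) x = fderiv ℝ v₁ x - fderiv ℝ v₂ x :=
      ((WU.hd1 v₁ _ hO₁ hv₁ x (hΩ₁ hxΩ)).sub (WU.hd1 v₂ _ hO₂ hv₂ x (hΩ₂ hxΩ))).fderiv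
    rw [hfd, sub_apply]
    have e : fderiv ℝ v₁ x (‖x‖⁻¹ • x) - fderiv ℝ v₂ x (‖x‖⁻¹ • x)
        - Complex.I * κ * (v₁ x - v₂ x) =
        (fderiv ℝ v₁ x (‖x‖⁻¹ • x) - Complex.I * κ * v₁ x)
        - (fderiv ℝ v₂ x (‖x‖⁻¹ • x) - Complex.I * κ * v₂ x) := by ring
    rw [e]
    have := mul_le_mul_of_nonneg_left (norm_sub_le
      (fderiv ℝ v₁ x (‖x‖⁻¹ • x) - Complex.I * κ * v₁ x)
      (fderiv ℝ v₂ x (‖x‖⁻¹ • x) - Complex.I * κ * v₂ x)) (Real.sqrt_nonneg ‖x‖)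
    rw [mul_add] at this
    linarith
  have hdec := WU.farField_diff κ v₁ v₂ vInf hff₁ hff₂
  obtain ⟨Rd, hRd⟩ := hdec 1 one_pos
  have htail : ∀ x : EuclideanSpace ℝ (Fin 2), A < ‖x‖ → v₁ x - v₂ x = 0 :=
    fun x hx => WU.tail_zero κ hκ (fun y => v₁ y - v₂ y) Ω hΩo hw hwH A hA hSU
      (fun n => WU.fF_tendsto _ n hdec)
      (fun n => WU.rad_tendsto κ _ Ω hΩo hw hwrad A hA hSU n 1 Rd hRd) x hx
  have heq : ∀ x ∈ Ω, v₁ x - v₂ x = 0 := by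
    have hn : A < ‖(A + 1) • WU.er 0‖ := by rw [hnr _ (by linarith)]; linarith
    refine WU.global_uc κ hκ (fun y => v₁ y - v₂ y) Ω hΩo hconn.isPreconnected hw hwH
      ((A + 1) • WU.er 0) (hAΩ _ hn) ?_
    filter_upwards [(isOpen_lt continuous_const continuous_norm).mem_nhds hn] with x hx
    exact htail x hx
  -- the glued function
  set u : EuclideanSpace ℝ (Fin 2) → ℂ := fun x => if x ∈ closure D₁ then v₂ x else v₁ x with hudef
  have hu₁ : ∀ x ∈ (closure D₁)ᶜ, u x = v₁ x := fun x hx => if_neg hx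
  have hu₂ : ∀ x ∈ (closure D₂)ᶜ, u x = v₂ x := by
    intro x hx
    by_cases h : x ∈ closure D₁
    · exact if_pos h
    · rw [hu₁ x h]
      exact sub_eq_zero.1 (heq x (by rw [hΩ, Set.mem_compl_iff, Set.mem_union]; tauto))
  have hcov : ∀ x, x ∈ (closure D₁)ᶜ ∨ x ∈ (closure D₂)ᶜ := by
    intro x
    by_contra h
    simp only [Set.mem_compl_iff, not_or, not_not] at h
    have : x ∈ closure D₁ ∩ closure D₂ := h
    rw [hne] at this
    exact this
  have hue₁ : ∀ x ∈ (closure D₁)ᶜ, u =ᶠ[nhds x] v₁ := fun x hx => by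
    filter_upwards [hO₁.mem_nhds hx] with y hy using hu₁ y hy
  have hue₂ : ∀ x ∈ (closure D₂)ᶜ, u =ᶠ[nhds x] v₂ := fun x hx => by
    filter_upwards [hO₂.mem_nhds hx] with y hy using hu₂ y hy
  have huc : ContDiffOn ℝ 2 u Set.univ := by
    intro x _
    refine ContDiffAt.contDiffWithinAt ?_
    rcases hcov x with h | h
    · exact (hv₁.contDiffAt (hO₁.mem_nhds h)).congr_of_eventuallyEq (hue₁ x h)
    · exact (hv₂.contDiffAt (hO₂.mem_nhds h)).congr_of_eventuallyEq (hue₂ x h)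
  have huH : ∀ x ∈ (Set.univ : Set (EuclideanSpace ℝ (Fin 2))),
      lap u x + (κ : ℂ) ^ 2 * u x = 0 := by
    intro x _
    rcases hcov x with h | h
    · rw [WU.lap_congr u v₁ x (hue₁ x h), hu₁ x h]; exact hHelm₁ x h
    · rw [WU.lap_congr u v₂ x (hue₂ x h), hu₂ x h]; exact hHelm₂ x h
  have hurad : SommerfeldRadiation κ u := by
    intro ε hε
    obtain ⟨R₁, hR₁, h₁⟩ := hrad₁ ε hε
    refine ⟨max R₁ (A + 1), by positivity, fun x hx => ?_⟩
    have hxΩ : x ∈ Ω := hAΩ x (by linarith [(le_max_right _ _).trans hx])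
    rw [(hue₁ x (hΩ₁ hxΩ)).fderiv_eq, hu₁ x (hΩ₁ hxΩ)]
    exact h₁ x ((le_max_left _ _).trans hx)
  obtain ⟨M, R, hMR⟩ := WU.farField_bound κ v₁ vInf hff₁ hcont
  have hzero : ∀ x : EuclideanSpace ℝ (Fin 2), 0 < ‖x‖ → u x = 0 := by
    refine WU.entire_zero κ hκ u huc huH hurad M (max R (A + 1)) ?_
    intro r hr t
    have hrA : A < r := by linarith [(le_max_right _ _).trans hr]
    have hm := hSU r hrA t
    rw [zero_add] at hm
    rw [hu₁ _ (hΩ₁ hm)]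
    exact hMR r ((le_max_left _ _).trans hr) t
  obtain ⟨θ, hθ, hθne⟩ := hnontriv
  have hθ1 : ‖θ‖ = 1 := by simpa using hθ
  have hc0 : farFieldConst κ ≠ 0 := by
    unfold farFieldConst
    refine div_ne_zero (Complex.exp_ne_zero _) ?_
    have : 0 < Real.sqrt (8 * Real.pi * κ) := Real.sqrt_pos.2 (by positivity)
    exact_mod_cast this.ne'
  have hpos : 0 < ‖farFieldConst κ * vInf θ‖ := norm_pos_iff.2 (mul_ne_zero hc0 hθne)
  obtain ⟨R₀, hR₀⟩ := hff₁ (‖farFieldConst κ * vInf θ‖ / 2) (by positivity)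
  have hr := hR₀ (max R₀ (A + 1)) (le_max_left _ _) θ hθ1
  have hrA : A < max R₀ (A + 1) := by linarith [le_max_right R₀ (A + 1)]
  have hn : ‖max R₀ (A + 1) • θ‖ = max R₀ (A + 1) := by
    rw [norm_smul, hθ1, mul_one, Real.norm_eq_abs, abs_of_pos (by linarith)]
  have hv0 : v₁ (max R₀ (A + 1) • θ) = 0 := by
    rw [← hu₁ _ (hΩ₁ (hAΩ _ (by rw [hn]; exact hrA)))]
    exact hzero _ (by rw [hn]; linarith)
  rw [hv0, mul_zero, zero_sub, norm_neg] at hr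
  linarith

end
end
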